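/- arXiv:1910.00706 — 16 statements merged into one kernel-verified Lean document; each statement's English description precedes it below -/
import Mathlib

section
/- For every real parameter α ≥ 0 and all real numbers a₀, a₁, a₂, b₀, b₁, b₂ ∈ [−1, 1], the local Bell value satisfies a₀(b₀+b₁+αb₂) + a₁(b₀+b₁−αb₂) + αa₂(b₀−b₁) ≤ 4·max{1, α}. In particular, the local-realistic bound of the Bell functional β = ⟨A₀B₀⟩+⟨A₀B₁⟩+α⟨A₀B₂⟩+⟨A₁B₀⟩+⟨A₁B₁⟩−α⟨A₁B₂⟩+α⟨A₂B₀⟩−α⟨A₂B₁⟩ equals β_L = 4·max{1, α}. -/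
/-!
With `s = a₀ + a₁`, `d = a₀ - a₁`, `t = b₀ + b₁`, `e = b₀ - b₁` the Bell value is
`s * t + α * d * b₂ + α * a₂ * e`, which is at most `M * (|s| * |t| + |d| + |e|)` for
`M = max 1 α`. Since `|s| + |d| ≤ 2` and `|t| + |e| ≤ 2`, it remains to see that
`|s| * |t| ≤ |s| + |t|`, which holds because both factors lie in `[0, 2]`.
The bound is attained by `a₀ = a₁ = b₀ = b₁ = 1` if `α ≤ 1`, and by
`a₀ = a₂ = b₀ = b₂ = 1`, `a₁ = b₁ = -1` if `α ≥ 1`.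
-/

lemma abs_add_add_abs_sub_le_two {x y : ℝ} (hx : x ∈ Set.Icc (-1 : ℝ) 1)
    (hy : y ∈ Set.Icc (-1 : ℝ) 1) : |x + y| + |x - y| ≤ 2 := by
  obtain ⟨hx1, hx2⟩ := hx
  obtain ⟨hy1, hy2⟩ := hy
  rcases abs_cases (x + y) with h | h <;> rcases abs_cases (x - y) with h' | h' <;> linarith

lemma mul_le_abs_of_mem_Icc (x : ℝ) {y : ℝ} (hy : y ∈ Set.Icc (-1 : ℝ) 1) :
    x * y ≤ |x| :=
  calc x * y ≤ |x * y| := le_abs_self _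
    _ = |x| * |y| := abs_mul x y
    _ ≤ |x| := mul_le_of_le_one_right (abs_nonneg x) (abs_le.mpr hy)

/-- For every real parameter `α ≥ 0` and all real numbers
`a₀, a₁, a₂, b₀, b₁, b₂ ∈ [−1, 1]`, the local Bell value satisfies
`a₀(b₀+b₁+αb₂) + a₁(b₀+b₁−αb₂) + αa₂(b₀−b₁) ≤ 4·max{1, α}`, and this bound is
attained, i.e. the local-realistic bound of the Bell functional equals `4·max{1,α}`. -/
theorem local_bound (α : ℝ) (hα : 0 ≤ α) :
    IsGreatest {β : ℝ | ∃ a₀ a₁ a₂ b₀ b₁ b₂ : ℝ,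
      a₀ ∈ Set.Icc (-1 : ℝ) 1 ∧ a₁ ∈ Set.Icc (-1 : ℝ) 1 ∧ a₂ ∈ Set.Icc (-1 : ℝ) 1 ∧
      b₀ ∈ Set.Icc (-1 : ℝ) 1 ∧ b₁ ∈ Set.Icc (-1 : ℝ) 1 ∧ b₂ ∈ Set.Icc (-1 : ℝ) 1 ∧
      β = a₀ * (b₀ + b₁ + α * b₂) + a₁ * (b₀ + b₁ - α * b₂) + α * a₂ * (b₀ - b₁)}
    (4 * max 1 α) := by
  constructor
  · rcases le_total α 1 with h | h
    · refine ⟨1, 1, 0, 1, 1, 0, ?_⟩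
      rw [max_eq_left h]
      norm_num
    · refine ⟨1, -1, 1, 1, -1, 1, ?_⟩
      rw [max_eq_right h]
      norm_num
      ring
  · rintro _ ⟨a₀, a₁, a₂, b₀, b₁, b₂, ha₀, ha₁, ha₂, hb₀, hb₁, hb₂, rfl⟩
    have hsd := abs_add_add_abs_sub_le_two ha₀ ha₁
    have hte := abs_add_add_abs_sub_le_two hb₀ hb₁
    have hd := mul_le_abs_of_mem_Icc (a₀ - a₁) hb₂
    have he := mul_le_abs_of_mem_Icc (b₀ - b₁) ha₂
    have hst : (a₀ + a₁) * (b₀ + b₁) ≤ |a₀ + a₁| * |b₀ + b₁| :=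
      (le_abs_self _).trans_eq (abs_mul _ _)
    have hs0 := abs_nonneg (a₀ + a₁)
    have ht0 := abs_nonneg (b₀ + b₁)
    have hd0 := abs_nonneg (a₀ - a₁)
    have he0 := abs_nonneg (b₀ - b₁)
    have hprod : |a₀ + a₁| * |b₀ + b₁| ≤ |a₀ + a₁| + |b₀ + b₁| := by
      nlinarith [mul_nonneg hs0 (show 0 ≤ 2 - |b₀ + b₁| by linarith),
        mul_nonneg ht0 (show 0 ≤ 2 - |a₀ + a₁| by linarith)]
    calc a₀ * (b₀ + b₁ + α * b₂) + a₁ * (b₀ + b₁ - α * b₂) + α * a₂ * (b₀ - b₁)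
        = (a₀ + a₁) * (b₀ + b₁) + α * ((a₀ - a₁) * b₂ + (b₀ - b₁) * a₂) := by ring
      _ ≤ 1 * (|a₀ + a₁| * |b₀ + b₁|) + α * (|a₀ - a₁| + |b₀ - b₁|) := by
          rw [one_mul]
          gcongr
      _ ≤ max 1 α * (|a₀ + a₁| * |b₀ + b₁|) + max 1 α * (|a₀ - a₁| + |b₀ - b₁|) := by
          gcongr
          · exact le_max_left _ _
          · exact le_max_right _ _
      _ = max 1 α * (|a₀ + a₁| * |b₀ + b₁| + |a₀ - a₁| + |b₀ - b₁|) := by ring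
      _ ≤ max 1 α * 4 := by
          gcongr
          linarith
      _ = 4 * max 1 α := mul_comm _ _
end

section
/- The algebraic sum-of-squares identity 2W = (2A₀² + 2A₁² + α²A₂²)⊗I + I⊗(2B₀² + 2B₁² + α²B₂²) − (L₀² + L₁² + L₂²) holds for all Hermitian matrices A₀, A₁, A₂ (of size m×m) and B₀, B₁, B₂ (of size n×n) and every real α. -/
/-! Since `X ⊗ I` and `I ⊗ Y` commute with product `X ⊗ Y`, each square `Lᵢ²` has the form
`X² ⊗ I + I ⊗ Y² - 2 X ⊗ Y` (`sq_local_sub`). By the parallelogram law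
`(A₀ + A₁)² + (A₀ - A₁)² = 2 A₀² + 2 A₁²`, and likewise for `B₀, B₁`, the local terms add up to
the local part of the identity, while the cross terms regroup to `2W` by bilinearity of `⊗`. -/

open Matrix
open scoped Kronecker

noncomputable section

variable {m n : ℕ}

/-- The Bell operator `W` with parameter `α`. -/
def bellOp (α : ℝ) (A₀ A₁ A₂ : Matrix (Fin m) (Fin m) ℂ)
    (B₀ B₁ B₂ : Matrix (Fin n) (Fin n) ℂ) :
    Matrix (Fin m × Fin n) (Fin m × Fin n) ℂ :=
  A₀ ⊗ₖ (B₀ + B₁ + (α : ℂ) • B₂) + A₁ ⊗ₖ (B₀ + B₁ - (α : ℂ) • B₂) +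
    (α : ℂ) • (A₂ ⊗ₖ (B₀ - B₁))

/-- `L₀ = (A₀+A₁)⊗I − I⊗(B₀+B₁)`. -/
def L₀op (A₀ A₁ : Matrix (Fin m) (Fin m) ℂ) (B₀ B₁ : Matrix (Fin n) (Fin n) ℂ) :
    Matrix (Fin m × Fin n) (Fin m × Fin n) ℂ :=
  (A₀ + A₁) ⊗ₖ (1 : Matrix (Fin n) (Fin n) ℂ) - (1 : Matrix (Fin m) (Fin m) ℂ) ⊗ₖ (B₀ + B₁)

/-- `L₁ = (A₀−A₁)⊗I − α I⊗B₂`. -/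
def L₁op (α : ℝ) (A₀ A₁ : Matrix (Fin m) (Fin m) ℂ) (B₂ : Matrix (Fin n) (Fin n) ℂ) :
    Matrix (Fin m × Fin n) (Fin m × Fin n) ℂ :=
  (A₀ - A₁) ⊗ₖ (1 : Matrix (Fin n) (Fin n) ℂ) -
    (α : ℂ) • ((1 : Matrix (Fin m) (Fin m) ℂ) ⊗ₖ B₂)

/-- `L₂ = α A₂⊗I − I⊗(B₀−B₁)`. -/
def L₂op (α : ℝ) (A₂ : Matrix (Fin m) (Fin m) ℂ) (B₀ B₁ : Matrix (Fin n) (Fin n) ℂ) :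
    Matrix (Fin m × Fin n) (Fin m × Fin n) ℂ :=
  (α : ℂ) • (A₂ ⊗ₖ (1 : Matrix (Fin n) (Fin n) ℂ)) -
    (1 : Matrix (Fin m) (Fin m) ℂ) ⊗ₖ (B₀ - B₁)

lemma sub_kronecker_aux (X Z : Matrix (Fin m) (Fin m) ℂ) (Y : Matrix (Fin n) (Fin n) ℂ) :
    (X - Z) ⊗ₖ Y = X ⊗ₖ Y - Z ⊗ₖ Y := by
  ext
  simp [sub_mul]

lemma kronecker_sub_aux (X : Matrix (Fin m) (Fin m) ℂ) (Y Z : Matrix (Fin n) (Fin n) ℂ) :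
    X ⊗ₖ (Y - Z) = X ⊗ₖ Y - X ⊗ₖ Z := by
  ext
  simp [mul_sub]

/-- The square of a difference of local operators: `X ⊗ I` and `I ⊗ Y` commute, with product
`X ⊗ Y`, so the usual binomial formula applies. -/
lemma sq_local_sub (X : Matrix (Fin m) (Fin m) ℂ) (Y : Matrix (Fin n) (Fin n) ℂ) :
    (X ⊗ₖ (1 : Matrix (Fin n) (Fin n) ℂ) - (1 : Matrix (Fin m) (Fin m) ℂ) ⊗ₖ Y) ^ 2 =
      (X * X) ⊗ₖ (1 : Matrix (Fin n) (Fin n) ℂ) + (1 : Matrix (Fin m) (Fin m) ℂ) ⊗ₖ (Y * Y) -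
        (2 : ℂ) • (X ⊗ₖ Y) := by
  simp only [sq, sub_mul, mul_sub, ← mul_kronecker_mul, one_mul, mul_one]
  module

/-- the sum-of-squares identity
`2W = (2A₀² + 2A₁² + α²A₂²)⊗I + I⊗(2B₀² + 2B₁² + α²B₂²) − (L₀² + L₁² + L₂²)`
for all Hermitian matrices `A₀, A₁, A₂, B₀, B₁, B₂` and every real `α`. -/
theorem sos_identity (α : ℝ) (A₀ A₁ A₂ : Matrix (Fin m) (Fin m) ℂ)
    (B₀ B₁ B₂ : Matrix (Fin n) (Fin n) ℂ)
    (hA₀ : A₀.IsHermitian) (hA₁ : A₁.IsHermitian) (hA₂ : A₂.IsHermitian)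
    (hB₀ : B₀.IsHermitian) (hB₁ : B₁.IsHermitian) (hB₂ : B₂.IsHermitian) :
    (2 : ℂ) • bellOp α A₀ A₁ A₂ B₀ B₁ B₂ =
      ((2 : ℂ) • A₀ ^ 2 + (2 : ℂ) • A₁ ^ 2 + ((α : ℂ) ^ 2) • A₂ ^ 2) ⊗ₖ
          (1 : Matrix (Fin n) (Fin n) ℂ) +
        (1 : Matrix (Fin m) (Fin m) ℂ) ⊗ₖ
          ((2 : ℂ) • B₀ ^ 2 + (2 : ℂ) • B₁ ^ 2 + ((α : ℂ) ^ 2) • B₂ ^ 2) -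
        ((L₀op A₀ A₁ B₀ B₁) ^ 2 + (L₁op α A₀ A₁ B₂) ^ 2 + (L₂op α A₂ B₀ B₁) ^ 2) := by
  -- The scalar `α` is moved inside the tensor factors so that each `Lᵢ` has the form
  -- `X ⊗ I - I ⊗ Y`.
  rw [L₀op, L₁op, L₂op, ← kronecker_smul, ← smul_kronecker, sq_local_sub,
    sq_local_sub, sq_local_sub]
  simp only [bellOp, sq, add_mul, mul_add, sub_mul, mul_sub, smul_mul_assoc,
    mul_smul_comm, add_kronecker, kronecker_add, sub_kronecker_aux, kronecker_sub_aux,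
    smul_kronecker, kronecker_smul]
  module

end
end

section
/- If the Hermitian matrices satisfy A_x² ⪯ I and B_y² ⪯ I for all x, y ∈ {0,1,2} (i.e. I − A_x² and I − B_y² are positive semidefinite), then the Bell operator obeys the quantum bound W ⪯ (4 + α²)·I⊗I, i.e. the matrix (4+α²)·I⊗I − W is positive semidefinite, for every real α. -/
/-!
The bound is a sum-of-squares identity. With `a_x = A_x ⊗ I` and `b_y = I ⊗ B_y`, which commute, put
`L₀ = a₀ + a₁ - (b₀ + b₁)`, `L₁ = a₀ - a₁ - α b₂`, `L₂ = α a₂ - (b₀ - b₁)`. Then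
`2 ((4 + α²) - W) = L₀² + L₁² + L₂² + 2 ∑_{x=0,1} ((1 - a_x²) + (1 - b_x²))
  + α² ((1 - a₂²) + (1 - b₂²))`,
and every term on the right is positive semidefinite.
-/

open Matrix
open scoped Kronecker ComplexOrder

noncomputable section

variable {m n : ℕ}

lemma sub_kronecker' (X X' : Matrix (Fin m) (Fin m) ℂ) (Y : Matrix (Fin n) (Fin n) ℂ) :
    (X - X') ⊗ₖ Y = X ⊗ₖ Y - X' ⊗ₖ Y := by
  ext i j
  simp [sub_mul]

lemma kronecker_sub' (X : Matrix (Fin m) (Fin m) ℂ) (Y Y' : Matrix (Fin n) (Fin n) ℂ) :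
    X ⊗ₖ (Y - Y') = X ⊗ₖ Y - X ⊗ₖ Y' := by
  ext i j
  simp [mul_sub]

lemma posSemidef_sq_of_isHermitian {ι : Type*} [Fintype ι] [DecidableEq ι] {L : Matrix ι ι ℂ}
    (hL : L.IsHermitian) : (L ^ 2).PosSemidef := by
  have h := posSemidef_conjTranspose_mul_self L
  rwa [hL.eq, ← sq] at h

/-- The sum-of-squares bound for two mutually commuting families `a`, `b` of Hermitian
contractions; no tensor-product structure is needed. -/
lemma bell_bound_of_commute {ι : Type*} [Fintype ι] [DecidableEq ι] (α : ℝ)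
    (a₀ a₁ a₂ b₀ b₁ b₂ : Matrix ι ι ℂ)
    (ha₀ : a₀.IsHermitian) (ha₁ : a₁.IsHermitian) (ha₂ : a₂.IsHermitian)
    (hb₀ : b₀.IsHermitian) (hb₁ : b₁.IsHermitian) (hb₂ : b₂.IsHermitian)
    (pa₀ : (1 - a₀ ^ 2).PosSemidef) (pa₁ : (1 - a₁ ^ 2).PosSemidef)
    (pa₂ : (1 - a₂ ^ 2).PosSemidef) (pb₀ : (1 - b₀ ^ 2).PosSemidef)
    (pb₁ : (1 - b₁ ^ 2).PosSemidef) (pb₂ : (1 - b₂ ^ 2).PosSemidef)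
    (c₀₀ : b₀ * a₀ = a₀ * b₀) (c₀₁ : b₁ * a₀ = a₀ * b₁) (c₀₂ : b₂ * a₀ = a₀ * b₂)
    (c₁₀ : b₀ * a₁ = a₁ * b₀) (c₁₁ : b₁ * a₁ = a₁ * b₁) (c₁₂ : b₂ * a₁ = a₁ * b₂)
    (c₂₀ : b₀ * a₂ = a₂ * b₀) (c₂₁ : b₁ * a₂ = a₂ * b₁) :
    (((4 + α ^ 2 : ℝ) : ℂ) • (1 : Matrix ι ι ℂ) -
      (a₀ * (b₀ + b₁ + (α : ℂ) • b₂) + a₁ * (b₀ + b₁ - (α : ℂ) • b₂) +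
        (α : ℂ) • (a₂ * (b₀ - b₁)))).PosSemidef := by
  have hα : IsSelfAdjoint (α : ℂ) := Complex.conj_ofReal α
  have half : (0 : ℂ) ≤ ((1 / 2 : ℝ) : ℂ) := by exact_mod_cast (by norm_num : (0 : ℝ) ≤ 1 / 2)
  have hsq : (0 : ℂ) ≤ ((α ^ 2 / 2 : ℝ) : ℂ) := by
    exact_mod_cast (by positivity : (0 : ℝ) ≤ α ^ 2 / 2)
  have hL₀ := posSemidef_sq_of_isHermitian ((ha₀.add ha₁).sub (hb₀.add hb₁))
  have hL₁ := posSemidef_sq_of_isHermitian ((ha₀.sub ha₁).sub (hb₂.smul hα))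
  have hL₂ := posSemidef_sq_of_isHermitian ((ha₂.smul hα).sub (hb₀.sub hb₁))
  have key := (((hL₀.add hL₁).add hL₂).smul half).add
    ((((pa₀.add pa₁).add pb₀).add pb₁).add ((pa₂.add pb₂).smul hsq))
  convert key using 1
  simp only [sq, mul_add, add_mul, mul_sub, sub_mul, smul_mul_assoc, mul_smul_comm,
    c₀₀, c₀₁, c₀₂, c₁₀, c₁₁, c₁₂, c₂₀, c₂₁]
  push_cast
  module

/-- if the Hermitian matrices satisfy `A_x² ⪯ I` and `B_y² ⪯ I`, then the
Bell operator obeys the quantum bound `W ⪯ (4 + α²)·I⊗I`, for every real `α`. -/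
theorem quantum_bound (α : ℝ) (A₀ A₁ A₂ : Matrix (Fin m) (Fin m) ℂ)
    (B₀ B₁ B₂ : Matrix (Fin n) (Fin n) ℂ)
    (hA₀ : A₀.IsHermitian) (hA₁ : A₁.IsHermitian) (hA₂ : A₂.IsHermitian)
    (hB₀ : B₀.IsHermitian) (hB₁ : B₁.IsHermitian) (hB₂ : B₂.IsHermitian)
    (hA₀sq : (1 - A₀ ^ 2).PosSemidef) (hA₁sq : (1 - A₁ ^ 2).PosSemidef)
    (hA₂sq : (1 - A₂ ^ 2).PosSemidef) (hB₀sq : (1 - B₀ ^ 2).PosSemidef)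
    (hB₁sq : (1 - B₁ ^ 2).PosSemidef) (hB₂sq : (1 - B₂ ^ 2).PosSemidef) :
    (((4 + α ^ 2 : ℝ) : ℂ) • (1 : Matrix (Fin m × Fin n) (Fin m × Fin n) ℂ) -
      bellOp α A₀ A₁ A₂ B₀ B₁ B₂).PosSemidef := by
  -- Embedding either factor preserves positivity of `1 - X²`.
  have left : ∀ {X : Matrix (Fin m) (Fin m) ℂ}, (1 - X ^ 2).PosSemidef →
      (1 - (X ⊗ₖ (1 : Matrix (Fin n) (Fin n) ℂ)) ^ 2).PosSemidef := by
    intro X h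
    have h' := h.kronecker (PosSemidef.one (n := Fin n) (R := ℂ))
    rw [sub_kronecker', one_kronecker_one] at h'
    rwa [sq, ← mul_kronecker_mul, one_mul, ← sq]
  have right : ∀ {Y : Matrix (Fin n) (Fin n) ℂ}, (1 - Y ^ 2).PosSemidef →
      (1 - ((1 : Matrix (Fin m) (Fin m) ℂ) ⊗ₖ Y) ^ 2).PosSemidef := by
    intro Y h
    have h' := (PosSemidef.one (n := Fin m) (R := ℂ)).kronecker h
    rw [kronecker_sub', one_kronecker_one] at h'
    rwa [sq, ← mul_kronecker_mul, one_mul, ← sq]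
  have hleft : ∀ {X : Matrix (Fin m) (Fin m) ℂ}, X.IsHermitian →
      (X ⊗ₖ (1 : Matrix (Fin n) (Fin n) ℂ)).IsHermitian := by
    intro X h
    rw [IsHermitian, conjTranspose_kronecker, h.eq, conjTranspose_one]
  have hright : ∀ {Y : Matrix (Fin n) (Fin n) ℂ}, Y.IsHermitian →
      ((1 : Matrix (Fin m) (Fin m) ℂ) ⊗ₖ Y).IsHermitian := by
    intro Y h
    rw [IsHermitian, conjTranspose_kronecker, h.eq, conjTranspose_one]
  have comm : ∀ (X : Matrix (Fin m) (Fin m) ℂ) (Y : Matrix (Fin n) (Fin n) ℂ),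
      ((1 : Matrix (Fin m) (Fin m) ℂ) ⊗ₖ Y) * (X ⊗ₖ (1 : Matrix (Fin n) (Fin n) ℂ)) =
        (X ⊗ₖ (1 : Matrix (Fin n) (Fin n) ℂ)) * ((1 : Matrix (Fin m) (Fin m) ℂ) ⊗ₖ Y) := by
    intro X Y
    simp only [← mul_kronecker_mul, one_mul, mul_one]
  have key := bell_bound_of_commute α _ _ _ _ _ _ (hleft hA₀) (hleft hA₁) (hleft hA₂)
    (hright hB₀) (hright hB₁) (hright hB₂) (left hA₀sq) (left hA₁sq) (left hA₂sq)
    (right hB₀sq) (right hB₁sq) (right hB₂sq) (comm _ _) (comm _ _) (comm _ _)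
    (comm _ _) (comm _ _) (comm _ _) (comm _ _) (comm _ _)
  simpa only [bellOp, ← kronecker_add, ← kronecker_sub', ← kronecker_smul, ← mul_kronecker_mul,
    one_mul, mul_one] using key

end
end

section
/- Let α ∈ (0, 2), θ_α = arcsin(α/2), and define the 2×2 observables A₀ = B₀ = cos θ_α·X + sin θ_α·Z, A₁ = B₁ = cos θ_α·X − sin θ_α·Z, A₂ = B₂ = Z. Then the maximally entangled state φ⁺ = (1/√2)(e₀⊗e₀ + e₁⊗e₁) ∈ ℂ⁴ attains the quantum bound of the Bell operator: ⟨φ⁺, W φ⁺⟩ = 4 + α². -/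
/-!
For `2 × 2` matrices, `⟨φ⁺, (M ⊗ N) φ⁺⟩ = tr(M Nᵀ) / 2`. Since `X` and `Z` are symmetric,
orthonormal for this pairing, and square to the identity, with `c = cos θ`, `s = sin θ` the three
terms of `W` contribute `2c² + αs`, `2c² + αs` and `2αs`. The total `4c² + 4αs` equals `4 + α²`
because `s = α / 2` and `c² = 1 - s²`.
-/

open Matrix
open scoped Kronecker

noncomputable section

/-- The Pauli matrix `X`. -/
def PauliX : Matrix (Fin 2) (Fin 2) ℂ := !![0, 1; 1, 0]

/-- The Pauli matrix `Z`. -/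
def PauliZ : Matrix (Fin 2) (Fin 2) ℂ := !![1, 0; 0, -1]

/-- The maximally entangled state `φ⁺ = (1/√2)(e₀⊗e₀ + e₁⊗e₁)` of two qubits. -/
def phiPlus : (Fin 2 × Fin 2) → ℂ := fun p => if p.1 = p.2 then ((Real.sqrt 2)⁻¹ : ℝ) else 0

/-- The expectation of a product operator in `φ⁺` is the half trace pairing `tr(M Nᵀ) / 2`, written
out in entries. -/
lemma phiPlus_kronecker (M N : Matrix (Fin 2) (Fin 2) ℂ) :
    star phiPlus ⬝ᵥ (M ⊗ₖ N).mulVec phiPlus =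
      (M 0 0 * N 0 0 + M 0 1 * N 0 1 + M 1 0 * N 1 0 + M 1 1 * N 1 1) / 2 := by
  have h : ((Real.sqrt 2 : ℝ) : ℂ)⁻¹ * ((Real.sqrt 2 : ℝ) : ℂ)⁻¹ = 1 / 2 := by
    rw [← mul_inv, ← Complex.ofReal_mul, Real.mul_self_sqrt (by norm_num)]
    norm_num
  simp [phiPlus, dotProduct, mulVec, Fintype.sum_prod_type, Fin.sum_univ_two]
  linear_combination (M 0 0 * N 0 0 + M 0 1 * N 0 1 + M 1 0 * N 1 0 + M 1 1 * N 1 1) * h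

/-- for `α ∈ (0,2)`, `θ_α = arcsin(α/2)`, and the ideal qubit observables
`A₀ = B₀ = cos θ_α·X + sin θ_α·Z`, `A₁ = B₁ = cos θ_α·X − sin θ_α·Z`, `A₂ = B₂ = Z`,
the maximally entangled state `φ⁺` attains the quantum bound: `⟨φ⁺, W φ⁺⟩ = 4 + α²`. -/
theorem ideal_realisation_attains_quantum_bound (α : ℝ) (hα : α ∈ Set.Ioo (0 : ℝ) 2) :
    let θ := Real.arcsin (α / 2)
    let A₀ : Matrix (Fin 2) (Fin 2) ℂ := (Real.cos θ : ℂ) • PauliX + (Real.sin θ : ℂ) • PauliZ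
    let A₁ : Matrix (Fin 2) (Fin 2) ℂ := (Real.cos θ : ℂ) • PauliX - (Real.sin θ : ℂ) • PauliZ
    let A₂ : Matrix (Fin 2) (Fin 2) ℂ := PauliZ
    let B₀ := A₀
    let B₁ := A₁
    let B₂ := A₂
    let W : Matrix (Fin 2 × Fin 2) (Fin 2 × Fin 2) ℂ :=
      A₀ ⊗ₖ (B₀ + B₁ + (α : ℂ) • B₂) + A₁ ⊗ₖ (B₀ + B₁ - (α : ℂ) • B₂) +
        (α : ℂ) • (A₂ ⊗ₖ (B₀ - B₁))
    star phiPlus ⬝ᵥ W.mulVec phiPlus = ((4 + α ^ 2 : ℝ) : ℂ) := by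
  intro θ A₀ A₁ A₂ B₀ B₁ B₂ W
  have hs : (Real.sin θ : ℂ) = α / 2 := by
    have h : Real.sin θ = α / 2 :=
      Real.sin_arcsin (by linarith [hα.1]) (by linarith [hα.2])
    rw [h]
    push_cast
    rfl
  have hc : (Real.cos θ : ℂ) ^ 2 = 1 - (α / 2) ^ 2 := by
    rw [← hs]
    exact_mod_cast Real.cos_sq' θ
  simp only [W, add_mulVec, smul_mulVec, dotProduct_add, dotProduct_smul, phiPlus_kronecker]
  simp only [B₀, B₁, B₂, A₀, A₁, A₂, hs]
  generalize (Real.cos θ : ℂ) = c at hc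
  simp [PauliX, PauliZ]
  linear_combination 4 * hc

end
end

section
/- Let α ∈ (0, 2), let A_x, B_y be Hermitian with A_x² ⪯ I and B_y² ⪯ I, and let ρ be a state on ℂ^m⊗ℂ^n whose reduced states ρ_A and ρ_B (partial traces over the second and first factor respectively) are positive definite. If ρ achieves the maximal quantum value, Tr(Wρ) = 4 + α², then all measurements are projective: A_x² = I and B_y² = I for every x, y ∈ {0,1,2}. -/
/-!
Write `aₓ = Aₓ ⊗ 1` and `b_y = 1 ⊗ B_y`; every `aₓ` commutes with every `b_y`, and
`2 (4 + α²) - 2 W` is a sum of squares of Hermitian operators plus a positive combination of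
the defects `1 - aₓ²` and `1 - b_y²` (`sos_identity`):

`(a₀ + a₁ - (b₀ + b₁))² + (a₀ - a₁ - α b₂)² + (α a₂ - (b₀ - b₁))²`
`  + 2 (1 - a₀²) + 2 (1 - a₁²) + 2 (1 - b₀²) + 2 (1 - b₁²) + α² (1 - a₂²) + α² (1 - b₂²)`.

The expectation in `ρ` of each summand is nonnegative, and at the maximal value these
expectations add up to zero, so each of them vanishes. The expectation of `P ⊗ 1` in `ρ` is that
of `P` in the reduced state, and a positive semidefinite `P` with zero expectation in a positive
definite state is zero. Applied to the defects, this gives `Aₓ² = 1` and `B_y² = 1`.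
-/

open Matrix
open scoped Kronecker ComplexOrder

noncomputable section

variable {m n : ℕ}

/-- Partial trace over the second tensor factor (reduced state of Alice). -/
def ptraceB (ρ : Matrix (Fin m × Fin n) (Fin m × Fin n) ℂ) : Matrix (Fin m) (Fin m) ℂ :=
  Matrix.of fun i j => ∑ k : Fin n, ρ (i, k) (j, k)

/-- Partial trace over the first tensor factor (reduced state of Bob). -/
def ptraceA (ρ : Matrix (Fin m × Fin n) (Fin m × Fin n) ℂ) : Matrix (Fin n) (Fin n) ℂ :=
  Matrix.of fun i j => ∑ k : Fin m, ρ (k, i) (k, j)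

open scoped MatrixOrder in
theorem exists_conjTranspose_mul_self {k : Type*} [Fintype k] [DecidableEq k]
    {P : Matrix k k ℂ} (hP : P.PosSemidef) : ∃ X : Matrix k k ℂ, P = Xᴴ * X :=
  CStarAlgebra.nonneg_iff_eq_star_mul_self.mp hP.nonneg

theorem trace_mul_re_nonneg {k : Type*} [Fintype k] [DecidableEq k]
    {P R : Matrix k k ℂ} (hP : P.PosSemidef) (hR : R.PosSemidef) : 0 ≤ (P * R).trace.re := by
  obtain ⟨X, rfl⟩ := exists_conjTranspose_mul_self hP
  rw [Matrix.mul_assoc, Matrix.trace_mul_comm]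
  exact (Complex.le_def.mp (hR.mul_mul_conjTranspose_same X).trace_nonneg).1

/-- A positive definite state is faithful: only the zero effect has zero expectation. -/
theorem eq_zero_of_trace_mul_re_eq_zero {k : Type*} [Fintype k] [DecidableEq k]
    {P R : Matrix k k ℂ} (hP : P.PosSemidef) (hR : R.PosDef) (h : (P * R).trace.re = 0) :
    P = 0 := by
  obtain ⟨X, rfl⟩ := exists_conjTranspose_mul_self hP
  have hps := hR.posSemidef.mul_mul_conjTranspose_same X
  rw [Matrix.mul_assoc, Matrix.trace_mul_comm] at h
  have h0 : (X * R * Xᴴ).trace = 0 :=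
    Complex.ext h (Complex.le_def.mp hps.trace_nonneg).2.symm
  rw [hps.trace_eq_zero_iff] at h0
  obtain ⟨Y, hY⟩ := exists_conjTranspose_mul_self hR.posSemidef
  have h1 : (Y * Xᴴ)ᴴ * (Y * Xᴴ) = 0 := by
    rw [← h0, hY, Matrix.conjTranspose_mul, Matrix.conjTranspose_conjTranspose]
    simp only [Matrix.mul_assoc]
  have h2 : R * Xᴴ = 0 := by
    rw [hY, Matrix.mul_assoc, Matrix.conjTranspose_mul_self_eq_zero.mp h1, Matrix.mul_zero]
  rw [hR.isUnit.mul_right_eq_zero.mp h2, Matrix.zero_mul]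

theorem trace_kronecker_one_mul (P : Matrix (Fin m) (Fin m) ℂ)
    (ρ : Matrix (Fin m × Fin n) (Fin m × Fin n) ℂ) :
    ((P ⊗ₖ (1 : Matrix (Fin n) (Fin n) ℂ)) * ρ).trace = (P * ptraceB ρ).trace := by
  simp only [Matrix.trace, Matrix.diag, Matrix.mul_apply, Fintype.sum_prod_type,
    Matrix.kroneckerMap_apply, ptraceB, Matrix.of_apply, Matrix.one_apply, mul_ite, mul_one,
    mul_zero, ite_mul, zero_mul, Finset.sum_ite_eq, Finset.mem_univ, if_true, Finset.mul_sum]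
  exact Finset.sum_congr rfl fun i _ => Finset.sum_comm

theorem trace_one_kronecker_mul (P : Matrix (Fin n) (Fin n) ℂ)
    (ρ : Matrix (Fin m × Fin n) (Fin m × Fin n) ℂ) :
    (((1 : Matrix (Fin m) (Fin m) ℂ) ⊗ₖ P) * ρ).trace = (P * ptraceA ρ).trace := by
  simp only [Matrix.trace, Matrix.diag, Matrix.mul_apply, Fintype.sum_prod_type_right,
    Matrix.kroneckerMap_apply, ptraceA, Matrix.of_apply, Matrix.one_apply, ite_mul, one_mul,
    zero_mul, Finset.sum_ite_eq, Finset.mem_univ, if_true, Finset.mul_sum]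
  exact Finset.sum_congr rfl fun i _ => Finset.sum_comm

theorem kron_sub_left (A C : Matrix (Fin m) (Fin m) ℂ) (B : Matrix (Fin n) (Fin n) ℂ) :
    (A - C) ⊗ₖ B = A ⊗ₖ B - C ⊗ₖ B := by
  ext; simp [sub_mul]

theorem kron_sub_right (A : Matrix (Fin m) (Fin m) ℂ) (B D : Matrix (Fin n) (Fin n) ℂ) :
    A ⊗ₖ (B - D) = A ⊗ₖ B - A ⊗ₖ D := by
  ext; simp [mul_sub]

/-- The sum-of-squares decomposition bounding `W` by `4 + α²`, for operators `aₓ` that commute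
with the `b_y`. -/
theorem sos_identity_s4 {k : Type*} [Fintype k] [DecidableEq k] (α : ℂ)
    {a₀ a₁ a₂ b₀ b₁ b₂ : Matrix k k ℂ}
    (h00 : b₀ * a₀ = a₀ * b₀) (h10 : b₁ * a₀ = a₀ * b₁) (h20 : b₂ * a₀ = a₀ * b₂)
    (h01 : b₀ * a₁ = a₁ * b₀) (h11 : b₁ * a₁ = a₁ * b₁) (h21 : b₂ * a₁ = a₁ * b₂)
    (h02 : b₀ * a₂ = a₂ * b₀) (h12 : b₁ * a₂ = a₂ * b₁) :
    (2 : ℂ) • (4 + α ^ 2) • (1 : Matrix k k ℂ) - (2 : ℂ) • (a₀ * (b₀ + b₁ + α • b₂) +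
      a₁ * (b₀ + b₁ - α • b₂) + α • (a₂ * (b₀ - b₁))) =
    (a₀ + a₁ - (b₀ + b₁)) * (a₀ + a₁ - (b₀ + b₁)) + (a₀ - a₁ - α • b₂) * (a₀ - a₁ - α • b₂) +
      (α • a₂ - (b₀ - b₁)) * (α • a₂ - (b₀ - b₁)) +
      (2 : ℂ) • (1 - a₀ * a₀) + (2 : ℂ) • (1 - a₁ * a₁) + α ^ 2 • (1 - a₂ * a₂) +
      (2 : ℂ) • (1 - b₀ * b₀) + (2 : ℂ) • (1 - b₁ * b₁) + α ^ 2 • (1 - b₂ * b₂) := by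
  simp only [mul_add, add_mul, mul_sub, sub_mul, smul_mul_assoc, mul_smul_comm,
    h00, h10, h20, h01, h11, h21, h02, h12]
  module

/-- for `α ∈ (0,2)`, Hermitian `A_x, B_y` with `A_x² ⪯ I`, `B_y² ⪯ I`, and a
state `ρ` with positive definite reduced states, achieving the maximal quantum value
`Tr(Wρ) = 4 + α²` forces all measurements to be projective: `A_x² = I` and `B_y² = I`. -/
theorem maximal_violation_implies_projective (α : ℝ) (hα : α ∈ Set.Ioo (0 : ℝ) 2)
    (A₀ A₁ A₂ : Matrix (Fin m) (Fin m) ℂ) (B₀ B₁ B₂ : Matrix (Fin n) (Fin n) ℂ)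
    (hA₀ : A₀.IsHermitian) (hA₁ : A₁.IsHermitian) (hA₂ : A₂.IsHermitian)
    (hB₀ : B₀.IsHermitian) (hB₁ : B₁.IsHermitian) (hB₂ : B₂.IsHermitian)
    (hA₀sq : (1 - A₀ ^ 2).PosSemidef) (hA₁sq : (1 - A₁ ^ 2).PosSemidef)
    (hA₂sq : (1 - A₂ ^ 2).PosSemidef) (hB₀sq : (1 - B₀ ^ 2).PosSemidef)
    (hB₁sq : (1 - B₁ ^ 2).PosSemidef) (hB₂sq : (1 - B₂ ^ 2).PosSemidef)
    (ρ : Matrix (Fin m × Fin n) (Fin m × Fin n) ℂ)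
    (hρ : ρ.PosSemidef) (hρtr : ρ.trace = 1)
    (hρA : (ptraceB ρ).PosDef) (hρB : (ptraceA ρ).PosDef)
    (hmax : (bellOp α A₀ A₁ A₂ B₀ B₁ B₂ * ρ).trace = ((4 + α ^ 2 : ℝ) : ℂ)) :
    A₀ ^ 2 = 1 ∧ A₁ ^ 2 = 1 ∧ A₂ ^ 2 = 1 ∧ B₀ ^ 2 = 1 ∧ B₁ ^ 2 = 1 ∧ B₂ ^ 2 = 1 := by
  have hα0 : 0 < α ^ 2 := by have := hα.1; positivity
  set IA : Matrix (Fin m) (Fin m) ℂ := 1 with hIA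
  set IB : Matrix (Fin n) (Fin n) ℂ := 1 with hIB
  have comm (A : Matrix (Fin m) (Fin m) ℂ) (B : Matrix (Fin n) (Fin n) ℂ) :
      (IA ⊗ₖ B) * (A ⊗ₖ IB) = (A ⊗ₖ IB) * (IA ⊗ₖ B) := by
    simp [← Matrix.mul_kronecker_mul, hIA, hIB]
  have hermA {A : Matrix (Fin m) (Fin m) ℂ} (h : A.IsHermitian) : (A ⊗ₖ IB).IsHermitian := by
    rw [Matrix.IsHermitian, Matrix.conjTranspose_kronecker, h.eq, hIB, Matrix.conjTranspose_one]
  have hermB {B : Matrix (Fin n) (Fin n) ℂ} (h : B.IsHermitian) : (IA ⊗ₖ B).IsHermitian := by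
    rw [Matrix.IsHermitian, Matrix.conjTranspose_kronecker, h.eq, hIA, Matrix.conjTranspose_one]
  have hermS {X : Matrix (Fin m × Fin n) (Fin m × Fin n) ℂ} (h : X.IsHermitian) :
      ((α : ℂ) • X).IsHermitian := by
    rw [Matrix.IsHermitian, Matrix.conjTranspose_smul, h.eq]; simp
  have sqA (A : Matrix (Fin m) (Fin m) ℂ) :
      1 - (A ⊗ₖ IB) * (A ⊗ₖ IB) = (IA - A ^ 2) ⊗ₖ IB := by
    rw [← Matrix.mul_kronecker_mul, kron_sub_left, pow_two, hIA, hIB,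
      Matrix.one_kronecker_one, Matrix.one_mul]
  have sqB (B : Matrix (Fin n) (Fin n) ℂ) :
      1 - (IA ⊗ₖ B) * (IA ⊗ₖ B) = IA ⊗ₖ (IB - B ^ 2) := by
    rw [← Matrix.mul_kronecker_mul, kron_sub_right, pow_two, hIA, hIB,
      Matrix.one_kronecker_one, Matrix.one_mul]
  have hW : bellOp α A₀ A₁ A₂ B₀ B₁ B₂ =
      (A₀ ⊗ₖ IB) * (IA ⊗ₖ B₀ + IA ⊗ₖ B₁ + (α : ℂ) • (IA ⊗ₖ B₂)) +
      (A₁ ⊗ₖ IB) * (IA ⊗ₖ B₀ + IA ⊗ₖ B₁ - (α : ℂ) • (IA ⊗ₖ B₂)) +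
      (α : ℂ) • ((A₂ ⊗ₖ IB) * (IA ⊗ₖ B₀ - IA ⊗ₖ B₁)) := by
    rw [← Matrix.kronecker_smul, ← Matrix.kronecker_add, ← Matrix.kronecker_add,
      ← kron_sub_right, ← kron_sub_right, ← Matrix.mul_kronecker_mul,
      ← Matrix.mul_kronecker_mul, ← Matrix.mul_kronecker_mul]
    simp [bellOp, hIA, hIB]
  have key := sos_identity_s4 (α : ℂ) (comm A₀ B₀) (comm A₀ B₁) (comm A₀ B₂) (comm A₁ B₀)
    (comm A₁ B₁) (comm A₁ B₂) (comm A₂ B₀) (comm A₂ B₁)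
  rw [← hW] at key
  simp only [sqA, sqB] at key
  have sqnn {X : Matrix (Fin m × Fin n) (Fin m × Fin n) ℂ} (h : X.IsHermitian) :
      0 ≤ ((X * X) * ρ).trace.re := by
    refine trace_mul_re_nonneg ?_ hρ
    have := Matrix.posSemidef_conjTranspose_mul_self X
    rwa [h.eq] at this
  have nnA {P : Matrix (Fin m) (Fin m) ℂ} (h : P.PosSemidef) :
      0 ≤ (P * ptraceB ρ).trace.re := trace_mul_re_nonneg h hρA.posSemidef
  have nnB {P : Matrix (Fin n) (Fin n) ℂ} (h : P.PosSemidef) :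
      0 ≤ (P * ptraceA ρ).trace.re := trace_mul_re_nonneg h hρB.posSemidef
  have s1 := sqnn (((hermA hA₀).add (hermA hA₁)).sub ((hermB hB₀).add (hermB hB₁)))
  have s2 := sqnn (((hermA hA₀).sub (hermA hA₁)).sub (hermS (hermB hB₂)))
  have s3 := sqnn ((hermS (hermA hA₂)).sub ((hermB hB₀).sub (hermB hB₁)))
  have tA₀ := nnA hA₀sq
  have tA₁ := nnA hA₁sq
  have tA₂ := nnA hA₂sq
  have tB₀ := nnB hB₀sq
  have tB₁ := nnB hB₁sq
  have tB₂ := nnB hB₂sq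
  have tA₂α := mul_nonneg hα0.le tA₂
  have tB₂α := mul_nonneg hα0.le tB₂
  -- Taking real parts of expectations in `ρ`; the left-hand side becomes `0` at the maximal value.
  replace key := congrArg (fun X => (X * ρ).trace) key
  simp only [Matrix.sub_mul _ _ ρ, Matrix.add_mul _ _ ρ, Matrix.smul_mul _ _ ρ,
    Matrix.trace_add, Matrix.trace_sub, Matrix.trace_smul, hmax, Matrix.one_mul, hρtr,
    trace_kronecker_one_mul, trace_one_kronecker_mul, smul_eq_mul, mul_one, hIA, hIB] at key
  have hre := congrArg Complex.re key
  have hl : (2 : ℂ) * (4 + (α : ℂ) ^ 2) - 2 * ((4 + α ^ 2 : ℝ) : ℂ) = 0 := by push_cast; ring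
  rw [hl, ← Complex.ofReal_pow, ← Complex.ofReal_ofNat 2] at hre
  simp only [Complex.add_re, Complex.re_ofReal_mul, Complex.zero_re] at hre
  have fA {A : Matrix (Fin m) (Fin m) ℂ} (h : (1 - A ^ 2).PosSemidef)
      (h0 : ((1 - A ^ 2) * ptraceB ρ).trace.re = 0) : A ^ 2 = 1 :=
    (sub_eq_zero.mp (eq_zero_of_trace_mul_re_eq_zero h hρA h0)).symm
  have fB {B : Matrix (Fin n) (Fin n) ℂ} (h : (1 - B ^ 2).PosSemidef)
      (h0 : ((1 - B ^ 2) * ptraceA ρ).trace.re = 0) : B ^ 2 = 1 :=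
    (sub_eq_zero.mp (eq_zero_of_trace_mul_re_eq_zero h hρB h0)).symm
  simp only [hIA, hIB] at *
  refine ⟨fA hA₀sq (by linarith), fA hA₁sq (by linarith), fA hA₂sq ?_, fB hB₀sq (by linarith),
    fB hB₁sq (by linarith), fB hB₂sq ?_⟩
  · exact (mul_eq_zero.mp (by linarith)).resolve_left hα0.ne'
  · exact (mul_eq_zero.mp (by linarith)).resolve_left hα0.ne'

end
end

section
/- Let α be a nonzero real, let A₀, A₁ be Hermitian m×m matrices with A₀² = A₁² = I, let B₂ be a Hermitian n×n matrix with B₂² = I, and let ρ be a positive semidefinite matrix on ℂ^m⊗ℂ^n whose partial trace ρ_A over the second factor is positive definite. If ((A₀ − A₁)⊗I − α·I⊗B₂)·ρ = 0, then the anticommutator satisfies A₀A₁ + A₁A₀ = (2 − α²)·I. -/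
/-!
Write `D = A₀ - A₁`. The hypothesis says `(D ⊗ I) ρ = α (I ⊗ B₂) ρ`. As `D ⊗ I` and `I ⊗ B₂` commute,
applying `D ⊗ I` once more gives `(D² ⊗ I) ρ = α² (I ⊗ B₂²) ρ = α² ρ`. Taking the partial trace over
the second factor (`ptraceB_kronecker_one_mul`) yields `(D² - α²) ρ_A = 0`, and `ρ_A` is invertible,
so `D² = α²`. Finally `D² = 2 - (A₀A₁ + A₁A₀)`.
-/

open Matrix
open scoped Kronecker ComplexOrder

noncomputable section

variable {m n : ℕ}

/-- The partial trace over the second factor is left-linear over operators on the first factor. -/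
lemma ptraceB_kronecker_one_mul (X : Matrix (Fin m) (Fin m) ℂ)
    (ρ : Matrix (Fin m × Fin n) (Fin m × Fin n) ℂ) :
    ptraceB ((X ⊗ₖ (1 : Matrix (Fin n) (Fin n) ℂ)) * ρ) = X * ptraceB ρ := by
  ext i j
  simp only [ptraceB, Matrix.of_apply, Matrix.mul_apply, Fintype.sum_prod_type,
    Matrix.kroneckerMap_apply, Matrix.one_apply, mul_ite, mul_one, mul_zero, ite_mul, zero_mul,
    Finset.sum_ite_eq, Finset.mem_univ, if_true, Finset.mul_sum]
  exact Finset.sum_comm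

/-- if `A₀² = A₁² = I`, `B₂² = I`, `ρ ⪰ 0` has positive definite reduced
state on Alice's side, and `((A₀ − A₁)⊗I − α·I⊗B₂)·ρ = 0` with `α ≠ 0`, then
`{A₀, A₁} = (2 − α²)·I`. -/
theorem anticommutator_A0_A1 (α : ℝ) (hα : α ≠ 0)
    (A₀ A₁ : Matrix (Fin m) (Fin m) ℂ) (B₂ : Matrix (Fin n) (Fin n) ℂ)
    (hA₀ : A₀.IsHermitian) (hA₁ : A₁.IsHermitian) (hB₂ : B₂.IsHermitian)
    (hA₀sq : A₀ ^ 2 = 1) (hA₁sq : A₁ ^ 2 = 1) (hB₂sq : B₂ ^ 2 = 1)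
    (ρ : Matrix (Fin m × Fin n) (Fin m × Fin n) ℂ)
    (hρ : ρ.PosSemidef) (hρA : (ptraceB ρ).PosDef)
    (hL : ((A₀ - A₁) ⊗ₖ (1 : Matrix (Fin n) (Fin n) ℂ) -
        (α : ℂ) • ((1 : Matrix (Fin m) (Fin m) ℂ) ⊗ₖ B₂)) * ρ = 0) :
    A₀ * A₁ + A₁ * A₀ = ((2 - α ^ 2 : ℝ) : ℂ) • (1 : Matrix (Fin m) (Fin m) ℂ) := by
  have hD : ((A₀ - A₁) ⊗ₖ (1 : Matrix (Fin n) (Fin n) ℂ)) * ρ =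
      (α : ℂ) • (((1 : Matrix (Fin m) (Fin m) ℂ) ⊗ₖ B₂) * ρ) := by
    rw [Matrix.sub_mul, Matrix.smul_mul] at hL
    exact sub_eq_zero.mp hL
  have hcomm : ((A₀ - A₁) ⊗ₖ (1 : Matrix (Fin n) (Fin n) ℂ)) *
        ((1 : Matrix (Fin m) (Fin m) ℂ) ⊗ₖ B₂) =
      ((1 : Matrix (Fin m) (Fin m) ℂ) ⊗ₖ B₂) *
        ((A₀ - A₁) ⊗ₖ (1 : Matrix (Fin n) (Fin n) ℂ)) := by
    simp only [← Matrix.mul_kronecker_mul, Matrix.one_mul, Matrix.mul_one]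
  have hBB : ((1 : Matrix (Fin m) (Fin m) ℂ) ⊗ₖ B₂) * ((1 : Matrix (Fin m) (Fin m) ℂ) ⊗ₖ B₂) = 1 := by
    rw [← Matrix.mul_kronecker_mul, Matrix.one_mul, ← sq, hB₂sq, Matrix.one_kronecker_one]
  have hDD : (((A₀ - A₁) * (A₀ - A₁)) ⊗ₖ (1 : Matrix (Fin n) (Fin n) ℂ)) * ρ =
      ((α : ℂ) ^ 2) • ρ := by
    calc _ = ((A₀ - A₁) ⊗ₖ (1 : Matrix (Fin n) (Fin n) ℂ)) *
          (((A₀ - A₁) ⊗ₖ (1 : Matrix (Fin n) (Fin n) ℂ)) * ρ) := by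
          rw [← Matrix.mul_assoc, ← Matrix.mul_kronecker_mul, Matrix.one_mul]
      _ = _ := by
          rw [hD, Matrix.mul_smul, ← Matrix.mul_assoc, hcomm, Matrix.mul_assoc, hD,
            Matrix.mul_smul, ← Matrix.mul_assoc, hBB, Matrix.one_mul, smul_smul, sq]
  have htr : (A₀ - A₁) * (A₀ - A₁) * ptraceB ρ = (((α : ℂ) ^ 2) • 1) * ptraceB ρ := by
    rw [← ptraceB_kronecker_one_mul, hDD, Matrix.smul_mul, Matrix.one_mul]
    ext i j
    simp [ptraceB, Finset.mul_sum]
  have hsq : (A₀ - A₁) * (A₀ - A₁) = ((α : ℂ) ^ 2) • 1 := hρA.isUnit.mul_right_cancel htr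
  have hexp : A₀ * A₁ + A₁ * A₀ = A₀ ^ 2 + A₁ ^ 2 - (A₀ - A₁) * (A₀ - A₁) := by
    noncomm_ring
  rw [hexp, hsq, hA₀sq, hA₁sq]
  push_cast
  rw [sub_smul, two_smul]

end
end

section
/- Let α be a nonzero real, let A₀, A₁, A₂ be Hermitian m×m matrices with A₀² = A₁² = A₂² = I and A₀A₁ + A₁A₀ = (2 − α²)·I, let B₀ be a Hermitian n×n matrix with B₀² = I, and let ρ be a positive semidefinite matrix on ℂ^m⊗ℂ^n whose partial trace ρ_A over the second factor is positive definite. If ((A₀ + A₁ + αA₂)⊗I − 2·I⊗B₀)·ρ = 0, then (A₀ + A₁ + αA₂)² = 4·I and consequently the anticommutator (A₀ + A₁)A₂ + A₂(A₀ + A₁) = 0. -/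
/-!
Write `S = A₀ + A₁ + αA₂`. The hypothesis says `(S ⊗ 1)ρ = 2(1 ⊗ B₀)ρ`. Since `S ⊗ 1` and `1 ⊗ B₀`
commute and `B₀² = 1`, applying `S ⊗ 1` once more gives `(S² ⊗ 1)ρ = 4ρ`. The partial trace over the
second factor is linear over left multiplication by `X ⊗ 1` (`ptraceB_kronecker_one_mul`), so
`(S² - 4)ρ_A = 0`, and `ρ_A` is invertible because it is positive definite; hence `S² = 4`.
Expanding the square with the algebraic relations gives `S² = 4 + α{A₀ + A₁, A₂}`, and `α ≠ 0`.
-/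

open Matrix
open scoped Kronecker ComplexOrder

noncomputable section

variable {m n : ℕ}

/-- if `A₀² = A₁² = A₂² = I`, `{A₀,A₁} = (2 − α²)·I`, `B₀² = I`, `ρ ⪰ 0` has
positive definite reduced state on Alice's side, and
`((A₀ + A₁ + αA₂)⊗I − 2·I⊗B₀)·ρ = 0` with `α ≠ 0`, then `(A₀ + A₁ + αA₂)² = 4·I` and
consequently `{A₀ + A₁, A₂} = 0`. -/
theorem anticommutator_A0A1_A2 (α : ℝ) (hα : α ≠ 0)
    (A₀ A₁ A₂ : Matrix (Fin m) (Fin m) ℂ) (B₀ : Matrix (Fin n) (Fin n) ℂ)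
    (hA₀ : A₀.IsHermitian) (hA₁ : A₁.IsHermitian) (hA₂ : A₂.IsHermitian)
    (hB₀ : B₀.IsHermitian)
    (hA₀sq : A₀ ^ 2 = 1) (hA₁sq : A₁ ^ 2 = 1) (hA₂sq : A₂ ^ 2 = 1) (hB₀sq : B₀ ^ 2 = 1)
    (hanti : A₀ * A₁ + A₁ * A₀ = ((2 - α ^ 2 : ℝ) : ℂ) • (1 : Matrix (Fin m) (Fin m) ℂ))
    (ρ : Matrix (Fin m × Fin n) (Fin m × Fin n) ℂ)
    (hρ : ρ.PosSemidef) (hρA : (ptraceB ρ).PosDef)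
    (hL : ((A₀ + A₁ + (α : ℂ) • A₂) ⊗ₖ (1 : Matrix (Fin n) (Fin n) ℂ) -
        (2 : ℂ) • ((1 : Matrix (Fin m) (Fin m) ℂ) ⊗ₖ B₀)) * ρ = 0) :
    (A₀ + A₁ + (α : ℂ) • A₂) ^ 2 = (4 : ℂ) • (1 : Matrix (Fin m) (Fin m) ℂ) ∧
      (A₀ + A₁) * A₂ + A₂ * (A₀ + A₁) = 0 := by
  set S := A₀ + A₁ + (α : ℂ) • A₂ with hS
  have h1 : (S ⊗ₖ (1 : Matrix (Fin n) (Fin n) ℂ)) * ρ =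
      (2 : ℂ) • (((1 : Matrix (Fin m) (Fin m) ℂ) ⊗ₖ B₀) * ρ) := by
    rw [Matrix.sub_mul, sub_eq_zero] at hL
    rw [hL, Matrix.smul_mul]
  have hcomm : (S ⊗ₖ (1 : Matrix (Fin n) (Fin n) ℂ)) * ((1 : Matrix (Fin m) (Fin m) ℂ) ⊗ₖ B₀) =
      ((1 : Matrix (Fin m) (Fin m) ℂ) ⊗ₖ B₀) * (S ⊗ₖ (1 : Matrix (Fin n) (Fin n) ℂ)) := by
    rw [← Matrix.mul_kronecker_mul, ← Matrix.mul_kronecker_mul]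
    simp
  have hBB : ((1 : Matrix (Fin m) (Fin m) ℂ) ⊗ₖ B₀) * ((1 : Matrix (Fin m) (Fin m) ℂ) ⊗ₖ B₀) =
      1 := by
    rw [← Matrix.mul_kronecker_mul, ← pow_two B₀, hB₀sq]
    simp
  have h2 : ((S ^ 2 - (4 : ℂ) • 1) ⊗ₖ (1 : Matrix (Fin n) (Fin n) ℂ)) * ρ = 0 := by
    have hsq : (S ^ 2) ⊗ₖ (1 : Matrix (Fin n) (Fin n) ℂ) =
        (S ⊗ₖ (1 : Matrix (Fin n) (Fin n) ℂ)) * (S ⊗ₖ (1 : Matrix (Fin n) (Fin n) ℂ)) := by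
      rw [← Matrix.mul_kronecker_mul, pow_two, one_mul]
    have hsub : (S ^ 2 - (4 : ℂ) • 1) ⊗ₖ (1 : Matrix (Fin n) (Fin n) ℂ) =
        (S ^ 2) ⊗ₖ (1 : Matrix (Fin n) (Fin n) ℂ) -
          ((4 : ℂ) • (1 : Matrix (Fin m) (Fin m) ℂ)) ⊗ₖ (1 : Matrix (Fin n) (Fin n) ℂ) := by
      ext i j
      simp only [Matrix.kroneckerMap_apply, Matrix.sub_apply, sub_mul]
    rw [hsub, Matrix.smul_kronecker, Matrix.one_kronecker_one, Matrix.sub_mul,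
      hsq, Matrix.mul_assoc, h1, Matrix.mul_smul, ← Matrix.mul_assoc, hcomm, Matrix.mul_assoc, h1,
      Matrix.mul_smul, ← Matrix.mul_assoc, hBB, smul_smul, Matrix.smul_mul]
    norm_num
  have h3 : (S ^ 2 - (4 : ℂ) • 1) * ptraceB ρ = 0 := by
    rw [← ptraceB_kronecker_one_mul, h2]
    ext i j
    simp [ptraceB]
  have h4 : S ^ 2 = (4 : ℂ) • (1 : Matrix (Fin m) (Fin m) ℂ) :=
    sub_eq_zero.mp (hρA.isUnit.mul_left_eq_zero.mp h3)
  refine ⟨h4, ?_⟩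
  have hexp : S ^ 2 = A₀ ^ 2 + A₁ ^ 2 + (A₀ * A₁ + A₁ * A₀) + ((α : ℂ) ^ 2) • A₂ ^ 2 +
      (α : ℂ) • ((A₀ + A₁) * A₂ + A₂ * (A₀ + A₁)) := by
    rw [hS]
    simp only [pow_two, Matrix.add_mul, Matrix.mul_add, Matrix.smul_mul, Matrix.mul_smul,
      smul_add, smul_smul]
    abel
  rw [h4, hA₀sq, hA₁sq, hA₂sq, hanti] at hexp
  have h5 : (1 : Matrix (Fin m) (Fin m) ℂ) + 1 + ((2 - α ^ 2 : ℝ) : ℂ) • 1 + ((α : ℂ) ^ 2) • 1 =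
      (4 : ℂ) • 1 := by
    push_cast
    module
  rw [h5, left_eq_add] at hexp
  exact (smul_eq_zero.mp hexp).resolve_left (by exact_mod_cast hα)

end
end

section
/- Let θ ∈ (0, π/2) and on ℂ²⊗ℂ^d set A₀ = (cos θ·X + sin θ·Z)⊗I and A₁ = (cos θ·X − sin θ·Z)⊗I. Suppose A₂ is Hermitian on ℂ²⊗ℂ^d with A₂² = I and (A₀+A₁)A₂ + A₂(A₀+A₁) = 0, and write A₂ = I⊗T₁ + X⊗T_X + Y⊗T_Y + Z⊗T_Z with Hermitian d×d matrices T₁, T_X, T_Y, T_Z. Then T₁ = 0, T_X = 0, T_Y² + T_Z² = I, and T_Y and T_Z commute: T_Y T_Z = T_Z T_Y. -/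
/-!
`A₀ + A₁ = 2 cos θ · X ⊗ I` with `cos θ ≠ 0`, so `A₂` anticommutes with `X ⊗ I`. As `X` commutes
with `I`, `X` and anticommutes with `Y`, `Z`, the anticommutator is `2 (I ⊗ T_X + X ⊗ T₁)`
(`pauliX_anticommutator`), and linear independence of the Pauli matrices forces `T₁ = T_X = 0`.
Then `A₂² = I ⊗ (T_Y² + T_Z²) + X ⊗ i [T_Y, T_Z]` (`pauliYZ_sq`), and comparing
coefficients with `A₂² = I` gives the remaining two identities.
-/

open Matrix
open scoped Kronecker

noncomputable section

/-- The Pauli matrix `Y`. -/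
def PauliY : Matrix (Fin 2) (Fin 2) ℂ := !![0, -Complex.I; Complex.I, 0]

lemma neg_kronecker {m n : Type*} (A : Matrix m m ℂ) (B : Matrix n n ℂ) :
    (-A) ⊗ₖ B = -(A ⊗ₖ B) := by
  ext; simp

lemma kronecker_neg {m n : Type*} (A : Matrix m m ℂ) (B : Matrix n n ℂ) :
    A ⊗ₖ (-B) = -(A ⊗ₖ B) := by
  ext; simp

/-- The Pauli basis is linearly independent over matrix coefficients; only the `I`, `X` part
of the expansion is needed below. -/
lemma eq_zero_of_one_kronecker_add_pauliX_kronecker {d : ℕ}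
    {P Q : Matrix (Fin d) (Fin d) ℂ}
    (h : (1 : Matrix (Fin 2) (Fin 2) ℂ) ⊗ₖ P + PauliX ⊗ₖ Q = 0) : P = 0 ∧ Q = 0 := by
  constructor
  · ext i j
    simpa [PauliX] using congrFun (congrFun h (0, i)) (0, j)
  · ext i j
    simpa [PauliX] using congrFun (congrFun h (0, i)) (1, j)

lemma pauliX_mul_self : PauliX * PauliX = 1 := by
  ext i j; fin_cases i <;> fin_cases j <;> simp [PauliX]

lemma pauliY_mul_self : PauliY * PauliY = 1 := by
  ext i j; fin_cases i <;> fin_cases j <;> simp [PauliY]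

lemma pauliZ_mul_self : PauliZ * PauliZ = 1 := by
  ext i j; fin_cases i <;> fin_cases j <;> simp [PauliZ]

lemma pauliX_mul_pauliY : PauliX * PauliY = -(PauliY * PauliX) := by
  ext i j; fin_cases i <;> fin_cases j <;> simp [PauliX, PauliY]

lemma pauliX_mul_pauliZ : PauliX * PauliZ = -(PauliZ * PauliX) := by
  ext i j; fin_cases i <;> fin_cases j <;> simp [PauliX, PauliZ]

lemma pauliY_mul_pauliZ : PauliY * PauliZ = Complex.I • PauliX := by
  ext i j; fin_cases i <;> fin_cases j <;> simp [PauliX, PauliY, PauliZ]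

lemma pauliZ_mul_pauliY : PauliZ * PauliY = -(Complex.I • PauliX) := by
  ext i j; fin_cases i <;> fin_cases j <;> simp [PauliX, PauliY, PauliZ]

/-- Since `X` commutes with `I`, `X` and anticommutes with `Y`, `Z`, the anticommutator with
`X ⊗ I` sees only the coefficients of `I` and `X`, and swaps them. -/
lemma pauliX_anticommutator {d : ℕ} (T₁ TX TY TZ : Matrix (Fin d) (Fin d) ℂ) :
    (PauliX ⊗ₖ (1 : Matrix (Fin d) (Fin d) ℂ)) *
        ((1 : Matrix (Fin 2) (Fin 2) ℂ) ⊗ₖ T₁ + PauliX ⊗ₖ TX + PauliY ⊗ₖ TY + PauliZ ⊗ₖ TZ) +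
      ((1 : Matrix (Fin 2) (Fin 2) ℂ) ⊗ₖ T₁ + PauliX ⊗ₖ TX + PauliY ⊗ₖ TY + PauliZ ⊗ₖ TZ) *
        (PauliX ⊗ₖ (1 : Matrix (Fin d) (Fin d) ℂ)) =
      (2 : ℂ) • ((1 : Matrix (Fin 2) (Fin 2) ℂ) ⊗ₖ TX + PauliX ⊗ₖ T₁) := by
  simp only [mul_add, add_mul, ← mul_kronecker_mul, one_mul, mul_one, pauliX_mul_self,
    pauliX_mul_pauliY, pauliX_mul_pauliZ, neg_kronecker]
  module

lemma pauliYZ_sq {d : ℕ} (TY TZ : Matrix (Fin d) (Fin d) ℂ) :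
    (PauliY ⊗ₖ TY + PauliZ ⊗ₖ TZ) ^ 2 =
      (1 : Matrix (Fin 2) (Fin 2) ℂ) ⊗ₖ (TY ^ 2 + TZ ^ 2) +
        PauliX ⊗ₖ (Complex.I • (TY * TZ - TZ * TY)) := by
  simp only [pow_two, mul_add, add_mul, ← mul_kronecker_mul, pauliY_mul_self, pauliZ_mul_self,
    pauliY_mul_pauliZ, pauliZ_mul_pauliY, neg_kronecker, smul_kronecker, kronecker_smul,
    kronecker_add, sub_eq_add_neg, kronecker_neg]
  module

/-- let `θ ∈ (0, π/2)` and on `ℂ²⊗ℂ^d` set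
`A₀ = (cos θ·X + sin θ·Z)⊗I`, `A₁ = (cos θ·X − sin θ·Z)⊗I`. If `A₂` is Hermitian with
`A₂² = I` and `{A₀+A₁, A₂} = 0`, and `A₂ = I⊗T₁ + X⊗T_X + Y⊗T_Y + Z⊗T_Z` with Hermitian
`T₁, T_X, T_Y, T_Z`, then `T₁ = 0`, `T_X = 0`, `T_Y² + T_Z² = I` and `[T_Y, T_Z] = 0`. -/
theorem A2_structure {d : ℕ} (θ : ℝ) (hθ : θ ∈ Set.Ioo (0 : ℝ) (Real.pi / 2))
    (A₂ : Matrix (Fin 2 × Fin d) (Fin 2 × Fin d) ℂ)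
    (T₁ TX TY TZ : Matrix (Fin d) (Fin d) ℂ)
    (hT₁ : T₁.IsHermitian) (hTX : TX.IsHermitian) (hTY : TY.IsHermitian)
    (hTZ : TZ.IsHermitian)
    (hA₂ : A₂.IsHermitian) (hA₂sq : A₂ ^ 2 = 1)
    (hdecomp : A₂ = (1 : Matrix (Fin 2) (Fin 2) ℂ) ⊗ₖ T₁ + PauliX ⊗ₖ TX +
      PauliY ⊗ₖ TY + PauliZ ⊗ₖ TZ)
    (hanti :
      letI A₀ : Matrix (Fin 2 × Fin d) (Fin 2 × Fin d) ℂ :=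
        ((Real.cos θ : ℂ) • PauliX + (Real.sin θ : ℂ) • PauliZ) ⊗ₖ
          (1 : Matrix (Fin d) (Fin d) ℂ)
      letI A₁ : Matrix (Fin 2 × Fin d) (Fin 2 × Fin d) ℂ :=
        ((Real.cos θ : ℂ) • PauliX - (Real.sin θ : ℂ) • PauliZ) ⊗ₖ
          (1 : Matrix (Fin d) (Fin d) ℂ)
      (A₀ + A₁) * A₂ + A₂ * (A₀ + A₁) = 0) :
    T₁ = 0 ∧ TX = 0 ∧ TY ^ 2 + TZ ^ 2 = 1 ∧ TY * TZ = TZ * TY := by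
  have hc : (Real.cos θ : ℂ) ≠ 0 := by
    have := Real.cos_pos_of_mem_Ioo ⟨by linarith [hθ.1, Real.pi_pos], hθ.2⟩
    exact_mod_cast this.ne'
  have hsum : ((Real.cos θ : ℂ) • PauliX + (Real.sin θ : ℂ) • PauliZ) ⊗ₖ
        (1 : Matrix (Fin d) (Fin d) ℂ) +
      ((Real.cos θ : ℂ) • PauliX - (Real.sin θ : ℂ) • PauliZ) ⊗ₖ
        (1 : Matrix (Fin d) (Fin d) ℂ) =
      (2 * (Real.cos θ : ℂ)) • (PauliX ⊗ₖ (1 : Matrix (Fin d) (Fin d) ℂ)) := by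
    rw [← add_kronecker, ← smul_kronecker]
    congr 1
    module
  rw [hsum, smul_mul_assoc, mul_smul_comm, ← smul_add, hdecomp, pauliX_anticommutator,
    smul_smul] at hanti
  obtain ⟨hX, h1⟩ := eq_zero_of_one_kronecker_add_pauliX_kronecker
    ((smul_eq_zero.mp hanti).resolve_left (mul_ne_zero (mul_ne_zero two_ne_zero hc) two_ne_zero))
  subst hX h1
  have hA : A₂ = PauliY ⊗ₖ TY + PauliZ ⊗ₖ TZ := by simpa using hdecomp
  rw [hA, pauliYZ_sq] at hA₂sq
  have hcoef : (1 : Matrix (Fin 2) (Fin 2) ℂ) ⊗ₖ (TY ^ 2 + TZ ^ 2 - 1) +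
      PauliX ⊗ₖ (Complex.I • (TY * TZ - TZ * TY)) = 0 := by
    rw [sub_eq_add_neg, kronecker_add, kronecker_neg, one_kronecker_one, add_right_comm, hA₂sq,
      add_neg_cancel]
  obtain ⟨hsq, hcomm⟩ := eq_zero_of_one_kronecker_add_pauliX_kronecker hcoef
  exact ⟨rfl, rfl, sub_eq_zero.mp hsq,
    sub_eq_zero.mp ((smul_eq_zero.mp hcomm).resolve_left Complex.I_ne_zero)⟩

end
end

section
/- Let α ∈ (0, 2) and θ_α = arcsin(α/2). For real angles u, v define the two-qubit observables A₀ = cos θ_α·X + sin θ_α·Z, A₁ = cos θ_α·X − sin θ_α·Z, A₂ = cos u·Y + sin u·Z for Alice, and B₀ = cos θ_α·X + sin θ_α·(−cos v·Y + sin v·Z), B₁ = cos θ_α·X − sin θ_α·(−cos v·Y + sin v·Z), B₂ = Z for Bob, and let R(u,v) = A₀⊗(B₀+B₁+αB₂) + A₁⊗(B₀+B₁−αB₂) + αA₂⊗(B₀−B₁) be the resulting 4×4 Bell operator. Then for every u, the vector φ⁺ = (1/√2)(e₀⊗e₀ + e₁⊗e₁) ∈ ℂ⁴ is an eigenvector of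 R(u,u) with eigenvalue 4 + α²: R(u,u)·φ⁺ = (4 + α²)·φ⁺. -/
/-!
Expanding the products gives
`R(u,u) = 4 cos² θ • X ⊗ X + 2α sin θ • (Z ⊗ Z + (cos u • Y + sin u • Z) ⊗ (-cos u • Y + sin u • Z))`.
On `φ⁺` the operators `X ⊗ X` and `Z ⊗ Z` act as `1`, `Y ⊗ Y` acts as `-1`, and `Y ⊗ Z` and
`Z ⊗ Y` act in the same way, so the mixed terms cancel. With `sin θ = α / 2` the eigenvalue is
`(4 - α²) + α² + α² (cos² u + sin² u) = 4 + α²`. The proof checks this coordinate by coordinate.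
-/

open Matrix
open scoped Kronecker

noncomputable section

/-- The two-qubit Bell operator `R(u,v)` of the family at parameter `α`. -/
def Rop (α u v : ℝ) : Matrix (Fin 2 × Fin 2) (Fin 2 × Fin 2) ℂ :=
  let θ := Real.arcsin (α / 2)
  let A₀ : Matrix (Fin 2) (Fin 2) ℂ := (Real.cos θ : ℂ) • PauliX + (Real.sin θ : ℂ) • PauliZ
  let A₁ : Matrix (Fin 2) (Fin 2) ℂ := (Real.cos θ : ℂ) • PauliX - (Real.sin θ : ℂ) • PauliZ
  let A₂ : Matrix (Fin 2) (Fin 2) ℂ := (Real.cos u : ℂ) • PauliY + (Real.sin u : ℂ) • PauliZ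
  let B₀ : Matrix (Fin 2) (Fin 2) ℂ := (Real.cos θ : ℂ) • PauliX +
    (Real.sin θ : ℂ) • (-(Real.cos v : ℂ) • PauliY + (Real.sin v : ℂ) • PauliZ)
  let B₁ : Matrix (Fin 2) (Fin 2) ℂ := (Real.cos θ : ℂ) • PauliX -
    (Real.sin θ : ℂ) • (-(Real.cos v : ℂ) • PauliY + (Real.sin v : ℂ) • PauliZ)
  let B₂ : Matrix (Fin 2) (Fin 2) ℂ := PauliZ
  A₀ ⊗ₖ (B₀ + B₁ + (α : ℂ) • B₂) + A₁ ⊗ₖ (B₀ + B₁ - (α : ℂ) • B₂) +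
    (α : ℂ) • (A₂ ⊗ₖ (B₀ - B₁))

/-- for every `α ∈ (0,2)` and every angle `u`, the maximally entangled state
`φ⁺` is an eigenvector of `R(u,u)` with eigenvalue `4 + α²`. -/
theorem phiPlus_eigenvector (α : ℝ) (hα : α ∈ Set.Ioo (0 : ℝ) 2) (u : ℝ) :
    (Rop α u u).mulVec phiPlus = ((4 + α ^ 2 : ℝ) : ℂ) • phiPlus := by
  obtain ⟨h0, h2⟩ := hα
  have hs : Real.sin (Real.arcsin (α / 2)) = α / 2 :=
    Real.sin_arcsin (by linarith) (by linarith)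
  have hc : ((Real.cos (Real.arcsin (α / 2)) : ℝ) : ℂ) ^ 2 = 1 - (α : ℂ) ^ 2 / 4 := by
    have h := Real.sin_sq_add_cos_sq (Real.arcsin (α / 2))
    rw [hs] at h
    have h' : Real.cos (Real.arcsin (α / 2)) ^ 2 = 1 - α ^ 2 / 4 := by linarith
    exact_mod_cast congrArg (fun x : ℝ => (x : ℂ)) h'
  have hu : ((Real.sin u : ℝ) : ℂ) ^ 2 + ((Real.cos u : ℝ) : ℂ) ^ 2 = 1 := by
    exact_mod_cast congrArg (fun x : ℝ => (x : ℂ)) (Real.sin_sq_add_cos_sq u)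
  have hI : Complex.I ^ 2 = -1 := Complex.I_sq
  simp only [Rop]
  rw [hs]
  -- The cosines and sines become arbitrary complex numbers, known only through `hc` and `hu`.
  generalize ((Real.cos (Real.arcsin (α / 2)) : ℝ) : ℂ) = c at *
  generalize ((Real.cos u : ℝ) : ℂ) = p at *
  generalize ((Real.sin u : ℝ) : ℂ) = q at *
  ext ⟨i, j⟩
  fin_cases i <;> fin_cases j <;>
    simp [Matrix.mulVec, dotProduct, Fintype.sum_prod_type, phiPlus, PauliX, PauliY, PauliZ] <;>
    grind

end
end

section
/- Let R, S be Hermitian operators on ℂ^d satisfying R² = S² = I. Then the Hermitian operator T := (1/(4√2))·[3(R + S) − (SRS + RSR)] satisfies −I ⪯ T ⪯ I, i.e. both I − T and I + T are positive semidefinite. -/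
/-!
Put `C = RS + SR`, which commutes with `R` and `S`. Then `M = 3(R + S) − (SRS + RSR)` equals
`(R + S)(4 − C)`, and since `(R ± S)² = 2 ± C`, one gets
`32 − M² = 32 − (2 + C)(4 − C)² = C²(6 − C) = 4C² + C(R − S)²C`,
a sum of Hermitian squares. Hence `1 − T²` is positive semidefinite for `T = M / √32`, and
`2(1 ∓ T) = (1 ∓ T)² + (1 − T²)` gives both bounds.
-/

open Matrix
open scoped ComplexOrder

noncomputable section

/-- The sum-of-squares identity `32 − M² = 4C² + C(R − S)²C` for two involutions. -/
lemma involution_sos {A : Type*} [Ring A] (R S : A) (hR : R * R = 1) (hS : S * S = 1) :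
    (3 * (R + S) - (S * R * S + R * S * R)) * (3 * (R + S) - (S * R * S + R * S * R))
      = 32 - (4 * ((R * S + S * R) * (R * S + S * R))
        + (R * S + S * R) * (R - S) * ((R - S) * (R * S + S * R))) := by
  have hR' : ∀ X, R * (R * X) = X := fun X => by rw [← mul_assoc, hR, one_mul]
  have hS' : ∀ X, S * (S * X) = X := fun X => by rw [← mul_assoc, hS, one_mul]
  have h3 : (3 : A) = 1 + 1 + 1 := by norm_num
  have h4 : (4 : A) = 1 + 1 + 1 + 1 := by norm_num
  have h32 : (32 : A) = (32 : ℤ) • 1 := by simp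
  rw [h3, h4, h32]
  simp only [mul_add, add_mul, mul_sub, sub_mul, mul_assoc, one_mul, hR, hS, hR', hS', mul_one]
  abel

/-- A Hermitian matrix whose square is at most `1` is itself at most `1`. -/
lemma one_sub_posSemidef_of_sq {d : ℕ} {T : Matrix (Fin d) (Fin d) ℂ} (hT : T.IsHermitian)
    (h : (1 - T * T).PosSemidef) : (1 - T).PosSemidef := by
  have hsq : ((1 - T) * (1 - T)).PosSemidef := by
    have := posSemidef_conjTranspose_mul_self (1 - T)
    rwa [conjTranspose_sub, conjTranspose_one, hT.eq] at this
  have hsum := (hsq.add h).smul (show (0 : ℝ) ≤ 1 / 2 by norm_num)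
  have heq : (1 / 2 : ℝ) • ((1 - T) * (1 - T) + (1 - T * T)) = 1 - T := by
    simp only [mul_sub, sub_mul, mul_one, one_mul]
    module
  rwa [heq] at hsum

/-- Lemma 1: for Hermitian `R, S` with `R² = S² = I`, the operator
`T = (1/(4√2))·[3(R + S) − (SRS + RSR)]` satisfies `−I ⪯ T ⪯ I`. -/
theorem T_operator_bounded {d : ℕ} (R S : Matrix (Fin d) (Fin d) ℂ)
    (hR : R.IsHermitian) (hS : S.IsHermitian)
    (hRsq : R ^ 2 = 1) (hSsq : S ^ 2 = 1) :
    letI T : Matrix (Fin d) (Fin d) ℂ :=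
      (((4 * Real.sqrt 2)⁻¹ : ℝ) : ℂ) • ((3 : ℂ) • (R + S) - (S * R * S + R * S * R))
    (1 - T).PosSemidef ∧ (1 + T).PosSemidef := by
  set T : Matrix (Fin d) (Fin d) ℂ :=
    (((4 * Real.sqrt 2)⁻¹ : ℝ) : ℂ) • ((3 : ℂ) • (R + S) - (S * R * S + R * S * R)) with hTdef
  have h3 : (3 : ℂ) • (R + S) = 3 * (R + S) := by
    rw [show (3 : Matrix (Fin d) (Fin d) ℂ) = 1 + 1 + 1 by norm_num, add_mul, add_mul, one_mul]
    module
  have hT : T.IsHermitian := by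
    simp only [hTdef, IsHermitian, conjTranspose_smul, conjTranspose_sub, conjTranspose_add,
      conjTranspose_mul, hR.eq, hS.eq, mul_assoc]
    simp
  have hC : (R * S + S * R)ᴴ = R * S + S * R := by
    simp [conjTranspose_mul, hR.eq, hS.eq, add_comm]
  have hsos := involution_sos R S (by rw [← sq, hRsq]) (by rw [← sq, hSsq])
  have hc : (((4 * Real.sqrt 2)⁻¹ : ℝ) : ℂ) * (((4 * Real.sqrt 2)⁻¹ : ℝ) : ℂ) = 1 / 32 := by
    rw [← Complex.ofReal_mul, ← mul_inv, mul_mul_mul_comm, Real.mul_self_sqrt (by norm_num)]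
    norm_num
  have hTT : (1 - T * T).PosSemidef := by
    have h1 := (posSemidef_conjTranspose_mul_self (R * S + S * R)).smul
      (show (0 : ℝ) ≤ 4 / 32 by norm_num)
    have h2 := (posSemidef_conjTranspose_mul_self ((R - S) * (R * S + S * R))).smul
      (show (0 : ℝ) ≤ 1 / 32 by norm_num)
    have h := h1.add h2
    rw [conjTranspose_mul, conjTranspose_sub, hC, hR.eq, hS.eq] at h
    convert h using 1
    rw [hTdef, smul_mul_smul_comm, hc, h3, hsos]
    generalize (R * S + S * R) * (R * S + S * R) = X
    generalize (R * S + S * R) * (R - S) * ((R - S) * (R * S + S * R)) = Y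
    have h4 : (4 : Matrix (Fin d) (Fin d) ℂ) * X = (4 : ℂ) • X := by
      rw [show (4 : Matrix (Fin d) (Fin d) ℂ) = 1 + 1 + 1 + 1 by norm_num]
      simp only [add_mul, one_mul]
      module
    have h32 : (32 : Matrix (Fin d) (Fin d) ℂ) = (32 : ℂ) • 1 := by
      rw [← Algebra.algebraMap_eq_smul_one, map_ofNat]
    rw [h4, h32]
    module
  refine ⟨one_sub_posSemidef_of_sq hT hTT, ?_⟩
  have := one_sub_posSemidef_of_sq hT.neg (by rwa [neg_mul_neg])
  rwa [sub_neg_eq_add] at this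

end
end

section
/- For every θ ∈ [0, π/2], the 4×4 Hermitian matrix I⊗I + ((3cos θ − cos 3θ)/(2√2))·X⊗X − sin 2θ·Y⊗Y + ((3sin θ + sin 3θ)/(2√2))·Z⊗Z is positive semidefinite. (This matrix is the transposed Choi operator, restricted to a 2×2 Jordan block, of the extraction channel Λ_B built from two binary observables with relative angle 2θ, and its positivity establishes complete positivity of Λ_B.) -/
/-!
The matrices `X ⊗ X`, `Y ⊗ Y`, `Z ⊗ Z` are simultaneously diagonal in the Bell basis, so
`1 + p X⊗X - q Y⊗Y + r Z⊗Z` has the eigenvalues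
`1 + p + q + r`, `1 - p - q + r`, `1 + p - q - r`, `1 - p + q - r`
(`pauli_diag_posSemidef`). With `c = cos θ`, `s = sin θ` the coefficients are
`p = c (1 + 2 s²) / √2`, `q = 2 s c`, `r = s (1 + 2 c²) / √2`. Hence `1 ± q = (s ± c)²` and
`r ± p = (s ± c)³ / √2`, so the four eigenvalues are
`(s + c)² (1 ± (s + c) / √2)` and `(s - c)² (1 ± (s - c) / √2)`.
They are nonnegative because `|s ± c| ≤ √2`.
-/

open Matrix
open scoped Kronecker ComplexOrder

noncomputable section

/-- A matrix diagonal in the Bell basis is positive semidefinite when its four eigenvalues are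
nonnegative. -/
theorem pauli_diag_posSemidef (p q r : ℝ) (h₁ : 0 ≤ 1 + p + q + r) (h₂ : 0 ≤ 1 - p - q + r)
    (h₃ : 0 ≤ 1 + p - q - r) (h₄ : 0 ≤ 1 - p + q - r) :
    ((1 : Matrix (Fin 2) (Fin 2) ℂ) ⊗ₖ (1 : Matrix (Fin 2) (Fin 2) ℂ) +
      (p : ℂ) • (PauliX ⊗ₖ PauliX) - (q : ℂ) • (PauliY ⊗ₖ PauliY) +
      (r : ℂ) • (PauliZ ⊗ₖ PauliZ)).PosSemidef := by
  have key : ∀ (t : ℝ) (M : Matrix (Fin 2) (Fin 2) ℂ), 0 ≤ t →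
      (((t / 2 : ℝ) : ℂ) • vecMulVec (fun i : Fin 2 × Fin 2 => M i.1 i.2)
        (star fun i : Fin 2 × Fin 2 => M i.1 i.2)).PosSemidef := fun t M ht =>
    (posSemidef_vecMulVec_self_star _).smul (Complex.zero_le_real.2 (by positivity))
  -- Spectral decomposition: each Bell vector is written as the 2×2 matrix of its coordinates,
  -- unnormalised with squared norm 2, which accounts for the factor `t / 2` above.
  convert (((key _ !![1, 0; 0, 1] h₁).add (key _ !![1, 0; 0, -1] h₂)).add
    (key _ !![0, 1; 1, 0] h₃)).add (key _ !![0, 1; -1, 0] h₄) using 1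
  ext ⟨i, j⟩ ⟨k, l⟩
  fin_cases i <;> fin_cases j <;> fin_cases k <;> fin_cases l <;>
    simp [PauliX, PauliY, PauliZ, vecMulVec_apply, one_apply] <;> ring

/-- The common form of the four eigenvalues: `x² (1 + x / √2)` is nonnegative once `x² ≤ 2`. -/
theorem sq_add_cube_div_sqrt_two_nonneg (x : ℝ) (hx : x ^ 2 ≤ 2) :
    0 ≤ x ^ 2 + x ^ 3 / √2 := by
  have h : -√2 ≤ x := (abs_le.1 (Real.abs_le_sqrt hx)).1
  have h' : x ^ 2 + x ^ 3 / √2 = x ^ 2 * ((x + √2) / √2) := by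
    field_simp
    ring
  rw [h']
  have : 0 ≤ x + √2 := by linarith
  positivity

/-- for every `θ ∈ [0, π/2]`, the 4×4 Hermitian matrix
`I⊗I + ((3cos θ − cos 3θ)/(2√2))·X⊗X − sin 2θ·Y⊗Y + ((3sin θ + sin 3θ)/(2√2))·Z⊗Z`
is positive semidefinite (the transposed Choi operator of the extraction channel `Λ_B`
restricted to a 2×2 Jordan block). -/
theorem choi_block_posSemidef (θ : ℝ) (hθ : θ ∈ Set.Icc (0 : ℝ) (Real.pi / 2)) :
    ((1 : Matrix (Fin 2) (Fin 2) ℂ) ⊗ₖ (1 : Matrix (Fin 2) (Fin 2) ℂ) +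
      (((3 * Real.cos θ - Real.cos (3 * θ)) / (2 * Real.sqrt 2) : ℝ) : ℂ) •
        (PauliX ⊗ₖ PauliX) -
      ((Real.sin (2 * θ) : ℝ) : ℂ) • (PauliY ⊗ₖ PauliY) +
      (((3 * Real.sin θ + Real.sin (3 * θ)) / (2 * Real.sqrt 2) : ℝ) : ℂ) •
        (PauliZ ⊗ₖ PauliZ)).PosSemidef := by
  have hsc := Real.sin_sq_add_cos_sq θ
  have hp : (3 * Real.cos θ - Real.cos (3 * θ)) / (2 * √2) =
      ((Real.sin θ + Real.cos θ) ^ 3 - (Real.sin θ - Real.cos θ) ^ 3) / 2 / √2 := by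
    rw [Real.cos_three_mul, div_div]
    congr 1
    linear_combination (-6 * Real.cos θ) * hsc
  have hr : (3 * Real.sin θ + Real.sin (3 * θ)) / (2 * √2) =
      ((Real.sin θ + Real.cos θ) ^ 3 + (Real.sin θ - Real.cos θ) ^ 3) / 2 / √2 := by
    rw [Real.sin_three_mul, div_div]
    congr 1
    linear_combination (-6 * Real.sin θ) * hsc
  have hadd : (Real.sin θ + Real.cos θ) ^ 2 ≤ 2 := by
    nlinarith [sq_nonneg (Real.sin θ - Real.cos θ)]
  have hsub : (Real.sin θ - Real.cos θ) ^ 2 ≤ 2 := by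
    nlinarith [sq_nonneg (Real.sin θ + Real.cos θ)]
  refine pauli_diag_posSemidef _ _ _ ?_ ?_ ?_ ?_ <;> rw [hp, hr, Real.sin_two_mul]
  · refine (sq_add_cube_div_sqrt_two_nonneg (Real.sin θ + Real.cos θ) hadd).trans_eq ?_
    linear_combination hsc
  · refine (sq_add_cube_div_sqrt_two_nonneg (Real.sin θ - Real.cos θ) hsub).trans_eq ?_
    linear_combination hsc
  · refine (sq_add_cube_div_sqrt_two_nonneg (-(Real.sin θ - Real.cos θ))
      (by rwa [neg_sq])).trans_eq ?_
    linear_combination hsc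
  · refine (sq_add_cube_div_sqrt_two_nonneg (-(Real.sin θ + Real.cos θ))
      (by rwa [neg_sq])).trans_eq ?_
    linear_combination hsc

end
end

section
/- (Theorem 1, near-projectivity.) Let A₀, A₁, A₂ be Hermitian m×m matrices and B₀, B₁, B₂ Hermitian n×n matrices with A_x² ⪯ I and B_y² ⪯ I, let W be the Bell operator at α = √2, and let ρ be a state on ℂ^m⊗ℂ^n with reduced states ρ_A, ρ_B. If Tr(Wρ) ≥ 6 − ε for some ε ≥ 0, then Tr(A_x² ρ_A) ≥ 1 − ε and Tr(B_y² ρ_B) ≥ 1 − ε for every x, y ∈ {0, 1, 2}. -/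
/-!
The theorem follows from one sum-of-squares identity. With
`C₀ = (B₀ + B₁ + √2 B₂) / 2`, `C₁ = (B₀ + B₁ - √2 B₂) / 2`, `C₂ = (B₀ - B₁) / √2`
one has `W = 2 ∑ A_x ⊗ C_x` and `∑ C_x² = ∑ B_y²`, whence
`∑ A_x² ⊗ 1 + ∑ 1 ⊗ B_y² - W = ∑ (A_x ⊗ 1 - 1 ⊗ C_x)² ⪰ 0`.
In the state `ρ` the six second moments therefore add up to at least `Tr(Wρ) ≥ 6 - ε`
(`two_mul_expVal_kronecker_le`), while each of them is at most `1`
(`expVal_sq_le_one_left`, `expVal_sq_le_one_right`); so each is at least `1 - ε`.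
-/

open Matrix
open scoped Kronecker ComplexOrder

noncomputable section

variable {m n : ℕ}

/-- The Bell operator `W` at `α = √2`:
`W = A₀⊗(B₀+B₁+√2 B₂) + A₁⊗(B₀+B₁−√2 B₂) + √2 A₂⊗(B₀−B₁)`. -/
def bellOpSqrt2 (A₀ A₁ A₂ : Matrix (Fin m) (Fin m) ℂ)
    (B₀ B₁ B₂ : Matrix (Fin n) (Fin n) ℂ) :
    Matrix (Fin m × Fin n) (Fin m × Fin n) ℂ :=
  A₀ ⊗ₖ (B₀ + B₁ + ((Real.sqrt 2 : ℝ) : ℂ) • B₂) +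
    A₁ ⊗ₖ (B₀ + B₁ - ((Real.sqrt 2 : ℝ) : ℂ) • B₂) +
    ((Real.sqrt 2 : ℝ) : ℂ) • (A₂ ⊗ₖ (B₀ - B₁))

/-- The anticommutator `{M, N} = MN + NM`. -/
def acomm {d : ℕ} (M N : Matrix (Fin d) (Fin d) ℂ) : Matrix (Fin d) (Fin d) ℂ :=
  M * N + N * M

/-- The expectation value `re Tr(X ρ)` of an observable `X`, as a real-linear functional of `X`. -/
def expVal {d : Type*} [Fintype d] (ρ : Matrix d d ℂ) : Matrix d d ℂ →ₗ[ℝ] ℝ where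
  toFun X := ((X * ρ).trace).re
  map_add' X Y := by simp [add_mul]
  map_smul' r X := by simp

lemma expVal_conjTranspose_mul_self_nonneg {d : Type*} [Fintype d] {ρ : Matrix d d ℂ}
    (hρ : ρ.PosSemidef) (D : Matrix d d ℂ) : 0 ≤ expVal ρ (Dᴴ * D) := by
  have h := (hρ.mul_mul_conjTranspose_same D).trace_nonneg
  have e : (Dᴴ * D * ρ).trace = (D * ρ * Dᴴ).trace := by
    rw [Matrix.mul_assoc, Matrix.trace_mul_comm]
  change 0 ≤ ((Dᴴ * D * ρ).trace).re
  rw [e]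
  exact (Complex.le_def.mp h).1

open scoped MatrixOrder in
lemma expVal_nonneg {d : Type*} [Fintype d] [DecidableEq d] {ρ P : Matrix d d ℂ}
    (hρ : ρ.PosSemidef) (hP : P.PosSemidef) : 0 ≤ expVal ρ P := by
  obtain ⟨D, rfl⟩ := CStarAlgebra.nonneg_iff_eq_star_mul_self.mp hP.nonneg
  exact expVal_conjTranspose_mul_self_nonneg hρ D

lemma expVal_kronecker_one (ρ : Matrix (Fin m × Fin n) (Fin m × Fin n) ℂ)
    (X : Matrix (Fin m) (Fin m) ℂ) :
    expVal ρ (X ⊗ₖ 1) = ((X * ptraceB ρ).trace).re := by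
  change (((X ⊗ₖ 1) * ρ).trace).re = _
  congr 1
  simp only [Matrix.trace, Matrix.diag_apply, Matrix.mul_apply, ptraceB, Matrix.of_apply,
    Fintype.sum_prod_type, Matrix.kroneckerMap_apply, Matrix.one_apply, mul_ite, mul_one, mul_zero,
    ite_mul, zero_mul, Finset.sum_ite_eq, Finset.mem_univ, if_true, Finset.mul_sum]
  exact Finset.sum_congr rfl fun _ _ => Finset.sum_comm

lemma expVal_one_kronecker (ρ : Matrix (Fin m × Fin n) (Fin m × Fin n) ℂ)
    (Y : Matrix (Fin n) (Fin n) ℂ) :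
    expVal ρ (1 ⊗ₖ Y) = ((Y * ptraceA ρ).trace).re := by
  change (((1 ⊗ₖ Y) * ρ).trace).re = _
  congr 1
  simp only [Matrix.trace, Matrix.diag_apply, Matrix.mul_apply, ptraceA, Matrix.of_apply,
    Fintype.sum_prod_type_right, Matrix.kroneckerMap_apply, Matrix.one_apply, ite_mul, one_mul,
    zero_mul, Finset.sum_ite_eq, Finset.mem_univ, if_true, Finset.mul_sum]
  exact Finset.sum_congr rfl fun _ _ => Finset.sum_comm

lemma expVal_sq_le_one_left {ρ : Matrix (Fin m × Fin n) (Fin m × Fin n) ℂ}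
    (hρ : ρ.PosSemidef) (hρtr : ρ.trace = 1) {A : Matrix (Fin m) (Fin m) ℂ}
    (hA : (1 - A ^ 2).PosSemidef) : expVal ρ ((A ^ 2) ⊗ₖ 1) ≤ 1 := by
  have h := expVal_nonneg hρ (hA.kronecker (Matrix.PosSemidef.one (n := Fin n) (R := ℂ)))
  have e : (1 - A ^ 2) ⊗ₖ (1 : Matrix (Fin n) (Fin n) ℂ) = 1 - (A ^ 2) ⊗ₖ 1 := by
    rw [eq_sub_iff_add_eq, ← Matrix.add_kronecker, sub_add_cancel, Matrix.one_kronecker_one]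
  have h1 : expVal ρ 1 = 1 := by simp [expVal, hρtr]
  rw [e, map_sub, h1] at h
  linarith

lemma expVal_sq_le_one_right {ρ : Matrix (Fin m × Fin n) (Fin m × Fin n) ℂ}
    (hρ : ρ.PosSemidef) (hρtr : ρ.trace = 1) {B : Matrix (Fin n) (Fin n) ℂ}
    (hB : (1 - B ^ 2).PosSemidef) : expVal ρ (1 ⊗ₖ (B ^ 2)) ≤ 1 := by
  have h := expVal_nonneg hρ ((Matrix.PosSemidef.one (n := Fin m) (R := ℂ)).kronecker hB)
  have e : (1 : Matrix (Fin m) (Fin m) ℂ) ⊗ₖ (1 - B ^ 2) = 1 - 1 ⊗ₖ (B ^ 2) := by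
    rw [eq_sub_iff_add_eq, ← Matrix.kronecker_add, sub_add_cancel, Matrix.one_kronecker_one]
  have h1 : expVal ρ 1 = 1 := by simp [expVal, hρtr]
  rw [e, map_sub, h1] at h
  linarith

/-- Positivity of the square `(A ⊗ 1 - 1 ⊗ C)²`, expanded. -/
lemma two_mul_expVal_kronecker_le {ρ : Matrix (Fin m × Fin n) (Fin m × Fin n) ℂ}
    (hρ : ρ.PosSemidef) {A : Matrix (Fin m) (Fin m) ℂ} {C : Matrix (Fin n) (Fin n) ℂ}
    (hA : A.IsHermitian) (hC : C.IsHermitian) :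
    2 * expVal ρ (A ⊗ₖ C) ≤ expVal ρ ((A ^ 2) ⊗ₖ 1) + expVal ρ (1 ⊗ₖ (C ^ 2)) := by
  have h := expVal_conjTranspose_mul_self_nonneg hρ (A ⊗ₖ 1 - 1 ⊗ₖ C)
  have e : (A ⊗ₖ 1 - 1 ⊗ₖ C)ᴴ * (A ⊗ₖ 1 - 1 ⊗ₖ C)
      = (A ^ 2) ⊗ₖ 1 + 1 ⊗ₖ (C ^ 2) - (A ⊗ₖ C + A ⊗ₖ C) := by
    rw [Matrix.conjTranspose_sub, Matrix.conjTranspose_kronecker, Matrix.conjTranspose_kronecker,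
      hA.eq, hC.eq, Matrix.conjTranspose_one, Matrix.conjTranspose_one, sub_mul, mul_sub, mul_sub]
    simp only [← Matrix.mul_kronecker_mul, Matrix.one_mul, Matrix.mul_one, pow_two]
    abel
  rw [e, map_sub, map_add, map_add] at h
  linarith

/-- Theorem 1, near-projectivity: if `A_x² ⪯ I`, `B_y² ⪯ I` and the state
`ρ` gives Bell value `Tr(Wρ) ≥ 6 − ε` at `α = √2`, then the measurements are nearly
projective: `Tr(A_x² ρ_A) ≥ 1 − ε` and `Tr(B_y² ρ_B) ≥ 1 − ε` for all `x, y`. -/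
theorem near_projectivity
    (A₀ A₁ A₂ : Matrix (Fin m) (Fin m) ℂ) (B₀ B₁ B₂ : Matrix (Fin n) (Fin n) ℂ)
    (hA₀ : A₀.IsHermitian) (hA₁ : A₁.IsHermitian) (hA₂ : A₂.IsHermitian)
    (hB₀ : B₀.IsHermitian) (hB₁ : B₁.IsHermitian) (hB₂ : B₂.IsHermitian)
    (hA₀sq : (1 - A₀ ^ 2).PosSemidef) (hA₁sq : (1 - A₁ ^ 2).PosSemidef)
    (hA₂sq : (1 - A₂ ^ 2).PosSemidef) (hB₀sq : (1 - B₀ ^ 2).PosSemidef)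
    (hB₁sq : (1 - B₁ ^ 2).PosSemidef) (hB₂sq : (1 - B₂ ^ 2).PosSemidef)
    (ρ : Matrix (Fin m × Fin n) (Fin m × Fin n) ℂ)
    (hρ : ρ.PosSemidef) (hρtr : ρ.trace = 1)
    (ε : ℝ) (hε : 0 ≤ ε)
    (hviol : 6 - ε ≤ ((bellOpSqrt2 A₀ A₁ A₂ B₀ B₁ B₂ * ρ).trace).re) :
    (1 - ε ≤ ((A₀ ^ 2 * ptraceB ρ).trace).re ∧
     1 - ε ≤ ((A₁ ^ 2 * ptraceB ρ).trace).re ∧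
     1 - ε ≤ ((A₂ ^ 2 * ptraceB ρ).trace).re) ∧
    (1 - ε ≤ ((B₀ ^ 2 * ptraceA ρ).trace).re ∧
     1 - ε ≤ ((B₁ ^ 2 * ptraceA ρ).trace).re ∧
     1 - ε ≤ ((B₂ ^ 2 * ptraceA ρ).trace).re) := by
  set s : ℂ := ((Real.sqrt 2 : ℝ) : ℂ) with hs
  have hss : s * s = 2 := by
    rw [hs, ← Complex.ofReal_mul, Real.mul_self_sqrt (by norm_num)]
    norm_num
  have hstar : star s = s := Complex.conj_ofReal _
  have hstar2 : star (s / 2) = s / 2 := by rw [star_div₀, hstar]; simp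
  have hstarh : star (1 / 2 : ℂ) = 1 / 2 := by simp
  set C₀ := (1 / 2 : ℂ) • (B₀ + B₁) + (s / 2) • B₂ with hC₀def
  set C₁ := (1 / 2 : ℂ) • (B₀ + B₁) - (s / 2) • B₂ with hC₁def
  -- The coefficient is `√2 / 2 = 1 / √2`.
  set C₂ := (s / 2) • (B₀ - B₁) with hC₂def
  have hP : ((1 / 2 : ℂ) • (B₀ + B₁)).IsHermitian := by
    rw [Matrix.IsHermitian, Matrix.conjTranspose_smul, hstarh, (hB₀.add hB₁).eq]
  have hQ : ((s / 2) • B₂).IsHermitian := by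
    rw [Matrix.IsHermitian, Matrix.conjTranspose_smul, hstar2, hB₂.eq]
  have hC₀ : C₀.IsHermitian := hP.add hQ
  have hC₁ : C₁.IsHermitian := hP.sub hQ
  have hC₂ : C₂.IsHermitian := by
    rw [Matrix.IsHermitian, Matrix.conjTranspose_smul, hstar2, (hB₀.sub hB₁).eq]
  have hsum : C₀ ^ 2 + C₁ ^ 2 + C₂ ^ 2 = B₀ ^ 2 + B₁ ^ 2 + B₂ ^ 2 := by
    have h4 : (s / 2) * (s / 2) = 1 / 2 := by linear_combination hss / 4
    have e : C₀ ^ 2 + C₁ ^ 2 = (2 : ℂ) • (((1 / 2 : ℂ) • (B₀ + B₁)) * ((1 / 2 : ℂ) • (B₀ + B₁)))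
        + (2 : ℂ) • (((s / 2) • B₂) * ((s / 2) • B₂)) := by
      rw [hC₀def, hC₁def, two_smul, two_smul]
      generalize (1 / 2 : ℂ) • (B₀ + B₁) = P
      generalize (s / 2) • B₂ = Q
      noncomm_ring
    rw [e, hC₂def, pow_two, smul_mul_smul_comm, smul_mul_smul_comm, smul_mul_smul_comm, h4]
    simp only [pow_two, add_mul, mul_add, sub_mul, mul_sub]
    module
  have hW : bellOpSqrt2 A₀ A₁ A₂ B₀ B₁ B₂ = (2 : ℝ) • (A₀ ⊗ₖ C₀ + A₁ ⊗ₖ C₁ + A₂ ⊗ₖ C₂) := by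
    have e₀ : B₀ + B₁ + s • B₂ = (2 : ℝ) • C₀ := by rw [hC₀def]; ext i j; simp; ring
    have e₁ : B₀ + B₁ - s • B₂ = (2 : ℝ) • C₁ := by rw [hC₁def]; ext i j; simp; ring
    have e₂ : s • (B₀ - B₁) = (2 : ℝ) • C₂ := by rw [hC₂def]; ext i j; simp; ring
    rw [bellOpSqrt2, ← hs, ← Matrix.kronecker_smul, e₀, e₁, e₂, Matrix.kronecker_smul,
      Matrix.kronecker_smul, Matrix.kronecker_smul, smul_add, smul_add]
  have hv : 6 - ε ≤ expVal ρ (bellOpSqrt2 A₀ A₁ A₂ B₀ B₁ B₂) := hviol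
  rw [hW, map_smul, map_add, map_add, smul_eq_mul] at hv
  have hCB := congrArg (fun X => expVal ρ ((1 : Matrix (Fin m) (Fin m) ℂ) ⊗ₖ X)) hsum
  simp only [Matrix.kronecker_add, map_add] at hCB
  have k₀ := two_mul_expVal_kronecker_le hρ hA₀ hC₀
  have k₁ := two_mul_expVal_kronecker_le hρ hA₁ hC₁
  have k₂ := two_mul_expVal_kronecker_le hρ hA₂ hC₂
  have a₀ := expVal_sq_le_one_left hρ hρtr hA₀sq
  have a₁ := expVal_sq_le_one_left hρ hρtr hA₁sq
  have a₂ := expVal_sq_le_one_left hρ hρtr hA₂sq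
  have b₀ := expVal_sq_le_one_right hρ hρtr hB₀sq
  have b₁ := expVal_sq_le_one_right hρ hρtr hB₁sq
  have b₂ := expVal_sq_le_one_right hρ hρtr hB₂sq
  simp only [← expVal_kronecker_one, ← expVal_one_kronecker]
  refine ⟨⟨?_, ?_, ?_⟩, ?_, ?_, ?_⟩ <;> linarith

end
end

section
/- (Theorem 1, approximate anticommutation.) Assume the hypotheses of the α = √2 robust self-testing setting with projective observables and Tr(Wρ) ≥ 6 − ε. Then Tr({A₀, A₁}² ρ_A) ≤ 4(3 + 2√2)·ε and Tr({A₀ + A₁, A₂}² ρ_A) ≤ 8(9 + 4√2)·ε. -/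
/-!
Write `aₓ = Aₓ ⊗ 1`, `b_y = 1 ⊗ B_y`, `t = √2 / 2`, and
`c₀ = (a₀ + a₁) / 2 + t a₂`, `c₁ = (a₀ + a₁) / 2 - t a₂`, `c₂ = t (a₀ - a₁)`.
Since the observables square to one, the Bell operator has the sum-of-squares decomposition
`6 - W = ∑ y, (b_y - c_y) ^ 2` (`bell_sos`). Writing `ρ = S Sᴴ`, so that
`Tr(Xᴴ X ρ) = ‖X S‖²` in the Frobenius norm, the hypothesis becomes
`∑ y, ‖(b_y - c_y) S‖² ≤ ε`.

As `b_y` commutes with `c_y` and squares to one, `(b_y + c_y) (b_y - c_y) = 1 - c_y ^ 2`, and this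
expresses the anticommutators through the operators `b_y - c_y`:
`{a₀, a₁} = 2 (b₂ + c₂) (b₂ - c₂)` (`acomm_factor`) and
`{a₀ + a₁, a₂} = √2 (-(b₀ + c₀) (b₀ - c₀) + (b₁ + c₁) (b₁ - c₁))` (`acomm_add_factor`).
Multiplication by a Hermitian involution preserves the Frobenius norm (`frobenius_norm_invol_mul`),
so the triangle inequality bounds the action of `b₂ + c₂` by `1 + √2` and that of `b₀ + c₀`,
`b₁ + c₁` by `2 + √2 / 2`. The first bound is `4 (1 + √2)² ε = 4 (3 + 2√2) ε`; the second comes out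
as `2 · 2 (2 + √2 / 2)² ε = 2 (9 + 4√2) ε`, which is a quarter of the asserted one.
-/

open Matrix
open scoped Kronecker ComplexOrder

noncomputable section

variable {m n : ℕ}

section Algebra

variable {R : Type*} [Ring R] [Algebra ℂ R]

/-- The sum-of-squares decomposition of `6 - W`. -/
theorem bell_sos (t : ℂ) (ht : t * t = 1 / 2) (a₀ a₁ a₂ b₀ b₁ b₂ : R)
    (h0 : a₀ * a₀ = 1) (h1 : a₁ * a₁ = 1) (h2 : a₂ * a₂ = 1)
    (k0 : b₀ * b₀ = 1) (k1 : b₁ * b₁ = 1) (k2 : b₂ * b₂ = 1)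
    (c00 : b₀ * a₀ = a₀ * b₀) (c01 : b₀ * a₁ = a₁ * b₀) (c02 : b₀ * a₂ = a₂ * b₀)
    (c10 : b₁ * a₀ = a₀ * b₁) (c11 : b₁ * a₁ = a₁ * b₁) (c12 : b₁ * a₂ = a₂ * b₁)
    (c20 : b₂ * a₀ = a₀ * b₂) (c21 : b₂ * a₁ = a₁ * b₂) :
    (b₀ - ((1 / 2 : ℂ) • a₀ + (1 / 2 : ℂ) • a₁ + t • a₂)) *
        (b₀ - ((1 / 2 : ℂ) • a₀ + (1 / 2 : ℂ) • a₁ + t • a₂)) +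
      (b₁ - ((1 / 2 : ℂ) • a₀ + (1 / 2 : ℂ) • a₁ - t • a₂)) *
        (b₁ - ((1 / 2 : ℂ) • a₀ + (1 / 2 : ℂ) • a₁ - t • a₂)) +
      (b₂ - (t • a₀ - t • a₁)) * (b₂ - (t • a₀ - t • a₁)) =
    (6 : ℂ) • (1 : R) - (a₀ * (b₀ + b₁ + (2 * t) • b₂) + a₁ * (b₀ + b₁ - (2 * t) • b₂) +
      (2 * t) • (a₂ * (b₀ - b₁))) := by
  simp only [mul_add, add_mul, mul_sub, sub_mul, smul_mul_assoc, mul_smul_comm, smul_add,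
    smul_sub, smul_smul, *]
  module

theorem acomm_factor (t : ℂ) (ht : t * t = 1 / 2) (a₀ a₁ b : R)
    (h0 : a₀ * a₀ = 1) (h1 : a₁ * a₁ = 1) (k : b * b = 1)
    (c0 : b * a₀ = a₀ * b) (c1 : b * a₁ = a₁ * b) :
    a₀ * a₁ + a₁ * a₀ =
      (2 : ℂ) • ((b + (t • a₀ - t • a₁)) * (b - (t • a₀ - t • a₁))) := by
  simp only [add_mul, mul_sub, sub_mul, smul_mul_assoc, mul_smul_comm, smul_add,
    smul_sub, smul_smul, *]
  module

theorem acomm_add_factor (t : ℂ) (ht : t * t = 1 / 2) (a₀ a₁ a₂ b₀ b₁ : R)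
    (k0 : b₀ * b₀ = 1) (k1 : b₁ * b₁ = 1)
    (c00 : b₀ * a₀ = a₀ * b₀) (c01 : b₀ * a₁ = a₁ * b₀) (c02 : b₀ * a₂ = a₂ * b₀)
    (c10 : b₁ * a₀ = a₀ * b₁) (c11 : b₁ * a₁ = a₁ * b₁) (c12 : b₁ * a₂ = a₂ * b₁) :
    (a₀ + a₁) * a₂ + a₂ * (a₀ + a₁) =
      (2 * t) • (-((b₀ + ((1 / 2 : ℂ) • a₀ + (1 / 2 : ℂ) • a₁ + t • a₂)) *
          (b₀ - ((1 / 2 : ℂ) • a₀ + (1 / 2 : ℂ) • a₁ + t • a₂))) +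
        (b₁ + ((1 / 2 : ℂ) • a₀ + (1 / 2 : ℂ) • a₁ - t • a₂)) *
          (b₁ - ((1 / 2 : ℂ) • a₀ + (1 / 2 : ℂ) • a₁ - t • a₂))) := by
  simp only [mul_add, add_mul, mul_sub, sub_mul, smul_mul_assoc, mul_smul_comm, smul_add,
    smul_sub, neg_sub, smul_smul, *]
  linear_combination (norm := module) (-2 * ht) • (a₀ * a₂ + a₂ * a₀ + a₁ * a₂ + a₂ * a₁)

end Algebra

section Frobenius

attribute [local instance] Matrix.frobeniusNormedAddCommGroup Matrix.frobeniusNormedSpace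

variable {p q : Type*} [Fintype p] [Fintype q]

theorem frobenius_norm_sq (X : Matrix p q ℂ) : ‖X‖ ^ 2 = ((Xᴴ * X).trace).re := by
  rw [frobenius_norm_def, ← Real.sqrt_eq_rpow, Real.sq_sqrt (by positivity)]
  simp only [Real.rpow_ofNat, trace, diag_apply, mul_apply, conjTranspose_apply, RCLike.star_def,
    Complex.re_sum, Complex.mul_re, Complex.conj_re, Complex.conj_im, neg_mul, sub_neg_eq_add,
    ← Complex.normSq_eq_norm_sq, Complex.normSq_apply]
  rw [Finset.sum_comm]

/-- A state `ρ = S Sᴴ` turns expectation values of squares into Frobenius norms. -/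
theorem trace_sq_mul_eq {H : Matrix p p ℂ} (hH : H.IsHermitian) (S : Matrix p q ℂ) :
    ((H * H * (S * Sᴴ)).trace).re = ‖H * S‖ ^ 2 := by
  rw [frobenius_norm_sq, conjTranspose_mul, hH.eq, ← Matrix.mul_assoc, trace_mul_comm]
  simp only [Matrix.mul_assoc]

variable [DecidableEq p]

theorem frobenius_norm_invol_mul {U : Matrix p p ℂ} (hU : U.IsHermitian) (h : U * U = 1)
    (X : Matrix p q ℂ) : ‖U * X‖ = ‖X‖ := by
  rw [← sq_eq_sq₀ (norm_nonneg _) (norm_nonneg _), frobenius_norm_sq, frobenius_norm_sq,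
    conjTranspose_mul, hU.eq, Matrix.mul_assoc, ← Matrix.mul_assoc U, h, Matrix.one_mul]

/-- The action of `b₂ + c₂` is bounded by `1 + 2 t = 1 + √2`. -/
theorem norm_add_sub_mul_le {t : ℝ} (ht : 0 ≤ t) {a₀ a₁ b : Matrix p p ℂ}
    (ha₀ : a₀.IsHermitian) (ha₁ : a₁.IsHermitian) (hb : b.IsHermitian)
    (h0 : a₀ * a₀ = 1) (h1 : a₁ * a₁ = 1) (k : b * b = 1) (X : Matrix p q ℂ) :
    ‖(b + ((t : ℂ) • a₀ - (t : ℂ) • a₁)) * X‖ ≤ (1 + 2 * t) * ‖X‖ := by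
  have e : (b + ((t : ℂ) • a₀ - (t : ℂ) • a₁)) * X =
      b * X + ((t : ℂ) • (a₀ * X) - (t : ℂ) • (a₁ * X)) := by
    simp only [Matrix.add_mul, Matrix.sub_mul, Matrix.smul_mul]
  have n0 : ‖(t : ℂ) • (a₀ * X)‖ = t * ‖X‖ := by
    rw [norm_smul, frobenius_norm_invol_mul ha₀ h0, Complex.norm_of_nonneg ht]
  have n1 : ‖(t : ℂ) • (a₁ * X)‖ = t * ‖X‖ := by
    rw [norm_smul, frobenius_norm_invol_mul ha₁ h1, Complex.norm_of_nonneg ht]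
  have nb := frobenius_norm_invol_mul hb k X
  have u1 := norm_add_le (b * X) ((t : ℂ) • (a₀ * X) - (t : ℂ) • (a₁ * X))
  have u2 := norm_sub_le ((t : ℂ) • (a₀ * X)) ((t : ℂ) • (a₁ * X))
  rw [e]
  linarith

/-- The action of `b₀ + c₀` (for `s = t`) and of `b₁ + c₁` (for `s = -t`) is bounded by
`2 + t = 2 + √2 / 2`. -/
theorem norm_add_add_mul_le (s : ℝ) {a₀ a₁ a₂ b : Matrix p p ℂ}
    (ha₀ : a₀.IsHermitian) (ha₁ : a₁.IsHermitian) (ha₂ : a₂.IsHermitian) (hb : b.IsHermitian)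
    (h0 : a₀ * a₀ = 1) (h1 : a₁ * a₁ = 1) (h2 : a₂ * a₂ = 1) (k : b * b = 1)
    (X : Matrix p q ℂ) :
    ‖(b + ((1 / 2 : ℂ) • a₀ + (1 / 2 : ℂ) • a₁ + (s : ℂ) • a₂)) * X‖ ≤ (2 + |s|) * ‖X‖ := by
  have e : (b + ((1 / 2 : ℂ) • a₀ + (1 / 2 : ℂ) • a₁ + (s : ℂ) • a₂)) * X =
      b * X + ((1 / 2 : ℂ) • (a₀ * X) + (1 / 2 : ℂ) • (a₁ * X) + (s : ℂ) • (a₂ * X)) := by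
    simp only [Matrix.add_mul, Matrix.smul_mul]
  have n0 : ‖(1 / 2 : ℂ) • (a₀ * X)‖ = 1 / 2 * ‖X‖ := by
    rw [norm_smul, frobenius_norm_invol_mul ha₀ h0]; norm_num
  have n1 : ‖(1 / 2 : ℂ) • (a₁ * X)‖ = 1 / 2 * ‖X‖ := by
    rw [norm_smul, frobenius_norm_invol_mul ha₁ h1]; norm_num
  have n2 : ‖(s : ℂ) • (a₂ * X)‖ = |s| * ‖X‖ := by
    rw [norm_smul, frobenius_norm_invol_mul ha₂ h2, Complex.norm_real, Real.norm_eq_abs]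
  have nb := frobenius_norm_invol_mul hb k X
  have u1 := norm_add_le (b * X)
    ((1 / 2 : ℂ) • (a₀ * X) + (1 / 2 : ℂ) • (a₁ * X) + (s : ℂ) • (a₂ * X))
  have u2 := norm_add₃_le (a := (1 / 2 : ℂ) • (a₀ * X)) (b := (1 / 2 : ℂ) • (a₁ * X))
    (c := (s : ℂ) • (a₂ * X))
  rw [e]
  linarith

/-- Both anticommutator bounds for commuting families of Hermitian involutions acting on a common
space, in the state `S Sᴴ`; here `t` stands for `√2 / 2`. -/
theorem acomm_bounds {t ε : ℝ} (ht : 0 ≤ t) (htt : t * t = 1 / 2) (hε : 0 ≤ ε)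
    {a₀ a₁ a₂ b₀ b₁ b₂ : Matrix p p ℂ}
    (ha₀ : a₀.IsHermitian) (ha₁ : a₁.IsHermitian) (ha₂ : a₂.IsHermitian)
    (hb₀ : b₀.IsHermitian) (hb₁ : b₁.IsHermitian) (hb₂ : b₂.IsHermitian)
    (h0 : a₀ * a₀ = 1) (h1 : a₁ * a₁ = 1) (h2 : a₂ * a₂ = 1)
    (k0 : b₀ * b₀ = 1) (k1 : b₁ * b₁ = 1) (k2 : b₂ * b₂ = 1)
    (c00 : b₀ * a₀ = a₀ * b₀) (c01 : b₀ * a₁ = a₁ * b₀) (c02 : b₀ * a₂ = a₂ * b₀)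
    (c10 : b₁ * a₀ = a₀ * b₁) (c11 : b₁ * a₁ = a₁ * b₁) (c12 : b₁ * a₂ = a₂ * b₁)
    (c20 : b₂ * a₀ = a₀ * b₂) (c21 : b₂ * a₁ = a₁ * b₂)
    (S : Matrix p q ℂ) (hS : (S * Sᴴ).trace = 1)
    (hW : 6 - ε ≤ (((a₀ * (b₀ + b₁ + (2 * t : ℂ) • b₂) + a₁ * (b₀ + b₁ - (2 * t : ℂ) • b₂) +
      (2 * t : ℂ) • (a₂ * (b₀ - b₁))) * (S * Sᴴ)).trace).re) :
    ‖(a₀ * a₁ + a₁ * a₀) * S‖ ^ 2 ≤ 4 * (3 + 4 * t) * ε ∧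
      ‖((a₀ + a₁) * a₂ + a₂ * (a₀ + a₁)) * S‖ ^ 2 ≤ 8 * (9 + 8 * t) * ε := by
  have htc : (t : ℂ) * t = 1 / 2 := by
    rw [← Complex.ofReal_mul, htt]; norm_num
  have real_smul : ∀ (r : ℂ) {a : Matrix p p ℂ}, star r = r → a.IsHermitian →
      (r • a).IsHermitian := fun r a hr ha => by
    rw [Matrix.IsHermitian, conjTranspose_smul, ha.eq, hr]
  have hhalf : star (1 / 2 : ℂ) = 1 / 2 := by simp
  have htstar : star (t : ℂ) = t := by simp
  have sos := bell_sos (t : ℂ) htc a₀ a₁ a₂ b₀ b₁ b₂ h0 h1 h2 k0 k1 k2 c00 c01 c02 c10 c11 c12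
    c20 c21
  have f1 := acomm_factor (t : ℂ) htc a₀ a₁ b₂ h0 h1 k2 c20 c21
  have f2 := acomm_add_factor (t : ℂ) htc a₀ a₁ a₂ b₀ b₁ k0 k1 c00 c01 c02 c10 c11 c12
  have B0 := norm_add_add_mul_le (q := q) t ha₀ ha₁ ha₂ hb₀ h0 h1 h2 k0
  have B1 := norm_add_add_mul_le (q := q) (-t) ha₀ ha₁ ha₂ hb₁ h0 h1 h2 k1
  have B2 := norm_add_sub_mul_le (q := q) ht ha₀ ha₁ hb₂ h0 h1 k2
  rw [abs_of_nonneg ht] at B0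
  rw [abs_neg, abs_of_nonneg ht, Complex.ofReal_neg, neg_smul, ← sub_eq_add_neg] at B1
  set c₀ := (1 / 2 : ℂ) • a₀ + (1 / 2 : ℂ) • a₁ + (t : ℂ) • a₂ with hc₀
  set c₁ := (1 / 2 : ℂ) • a₀ + (1 / 2 : ℂ) • a₁ - (t : ℂ) • a₂ with hc₁
  set c₂ := (t : ℂ) • a₀ - (t : ℂ) • a₁ with hc₂
  have hD₀ : (b₀ - c₀).IsHermitian := hb₀.sub
    (((real_smul _ hhalf ha₀).add (real_smul _ hhalf ha₁)).add (real_smul _ htstar ha₂))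
  have hD₁ : (b₁ - c₁).IsHermitian := hb₁.sub
    (((real_smul _ hhalf ha₀).add (real_smul _ hhalf ha₁)).sub (real_smul _ htstar ha₂))
  have hD₂ : (b₂ - c₂).IsHermitian := hb₂.sub
    ((real_smul _ htstar ha₀).sub (real_smul _ htstar ha₁))
  have hsum : ‖(b₀ - c₀) * S‖ ^ 2 + ‖(b₁ - c₁) * S‖ ^ 2 + ‖(b₂ - c₂) * S‖ ^ 2 ≤ ε := by
    rw [← trace_sq_mul_eq hD₀, ← trace_sq_mul_eq hD₁, ← trace_sq_mul_eq hD₂, ← Complex.add_re,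
      ← Complex.add_re, ← trace_add, ← trace_add, ← Matrix.add_mul, ← Matrix.add_mul, sos,
      Matrix.sub_mul, trace_sub, Complex.sub_re, Matrix.smul_mul, Matrix.one_mul, trace_smul, hS]
    norm_num
    linarith
  constructor
  · have hb : ‖(a₀ * a₁ + a₁ * a₀) * S‖ ≤ 2 * ((1 + 2 * t) * ‖(b₂ - c₂) * S‖) := by
      rw [f1, Matrix.smul_mul, Matrix.mul_assoc, norm_smul]
      have := B2 ((b₂ - c₂) * S)
      norm_num
      exact this
    have hsq := pow_le_pow_left₀ (norm_nonneg _) hb 2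
    have e : (2 * ((1 + 2 * t) * ‖(b₂ - c₂) * S‖)) ^ 2 =
        4 * (3 + 4 * t) * ‖(b₂ - c₂) * S‖ ^ 2 := by
      linear_combination 16 * ‖(b₂ - c₂) * S‖ ^ 2 * htt
    have hle : ‖(b₂ - c₂) * S‖ ^ 2 ≤ ε := by
      linarith [sq_nonneg ‖(b₀ - c₀) * S‖, sq_nonneg ‖(b₁ - c₁) * S‖]
    rw [e] at hsq
    exact hsq.trans (mul_le_mul_of_nonneg_left hle (by positivity))
  · have hb : ‖((a₀ + a₁) * a₂ + a₂ * (a₀ + a₁)) * S‖ ≤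
        2 * t * ((2 + t) * (‖(b₀ - c₀) * S‖ + ‖(b₁ - c₁) * S‖)) := by
      rw [f2, Matrix.smul_mul, Matrix.add_mul, Matrix.neg_mul, Matrix.mul_assoc, Matrix.mul_assoc,
        norm_smul, norm_mul, Complex.norm_of_nonneg ht, Complex.norm_ofNat]
      refine mul_le_mul_of_nonneg_left ?_ (by positivity)
      have u := norm_add_le (-((b₀ + c₀) * ((b₀ - c₀) * S))) ((b₁ + c₁) * ((b₁ - c₁) * S))
      rw [norm_neg] at u
      linarith [B0 ((b₀ - c₀) * S), B1 ((b₁ - c₁) * S)]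
    have hsq := pow_le_pow_left₀ (norm_nonneg _) hb 2
    have e : (2 * t * ((2 + t) * (‖(b₀ - c₀) * S‖ + ‖(b₁ - c₁) * S‖))) ^ 2 =
        (9 + 8 * t) * (‖(b₀ - c₀) * S‖ + ‖(b₁ - c₁) * S‖) ^ 2 := by
      linear_combination (‖(b₀ - c₀) * S‖ + ‖(b₁ - c₁) * S‖) ^ 2 *
        (4 * (2 + t) ^ 2 + 2) * htt
    have hle : (‖(b₀ - c₀) * S‖ + ‖(b₁ - c₁) * S‖) ^ 2 ≤ 2 * ε := by
      nlinarith [sq_nonneg (‖(b₀ - c₀) * S‖ - ‖(b₁ - c₁) * S‖), sq_nonneg ‖(b₂ - c₂) * S‖]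
    have h9 := mul_le_mul_of_nonneg_left hle (show 0 ≤ 9 + 8 * t by positivity)
    have hpos : 0 ≤ (9 + 8 * t) * ε := by positivity
    linarith

end Frobenius

/-- The reduced state reproduces the expectation values of Alice's local operators. -/
theorem trace_mul_ptraceB (X : Matrix (Fin m) (Fin m) ℂ)
    (ρ : Matrix (Fin m × Fin n) (Fin m × Fin n) ℂ) :
    (X * ptraceB ρ).trace = ((X ⊗ₖ (1 : Matrix (Fin n) (Fin n) ℂ)) * ρ).trace := by
  simp only [trace, diag_apply, mul_apply, ptraceB, of_apply, Fintype.sum_prod_type,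
    kroneckerMap_apply, one_apply, mul_ite, mul_one, mul_zero, ite_mul, zero_mul,
    Finset.sum_ite_eq, Finset.mem_univ, if_true, Finset.mul_sum]
  exact Finset.sum_congr rfl fun i _ => Finset.sum_comm

/-- Theorem 1, approximate anticommutation: with projective observables and
`Tr(Wρ) ≥ 6 − ε` at `α = √2`, we have `Tr({A₀,A₁}² ρ_A) ≤ 4(3 + 2√2)·ε` and
`Tr({A₀+A₁,A₂}² ρ_A) ≤ 8(9 + 4√2)·ε`. -/
theorem approximate_anticommutation
    (A₀ A₁ A₂ : Matrix (Fin m) (Fin m) ℂ) (B₀ B₁ B₂ : Matrix (Fin n) (Fin n) ℂ)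
    (hA₀ : A₀.IsHermitian) (hA₁ : A₁.IsHermitian) (hA₂ : A₂.IsHermitian)
    (hB₀ : B₀.IsHermitian) (hB₁ : B₁.IsHermitian) (hB₂ : B₂.IsHermitian)
    (hA₀sq : A₀ ^ 2 = 1) (hA₁sq : A₁ ^ 2 = 1) (hA₂sq : A₂ ^ 2 = 1)
    (hB₀sq : B₀ ^ 2 = 1) (hB₁sq : B₁ ^ 2 = 1) (hB₂sq : B₂ ^ 2 = 1)
    (ρ : Matrix (Fin m × Fin n) (Fin m × Fin n) ℂ)
    (hρ : ρ.PosSemidef) (hρtr : ρ.trace = 1)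
    (ε : ℝ) (hε : 0 ≤ ε)
    (hviol : 6 - ε ≤ ((bellOpSqrt2 A₀ A₁ A₂ B₀ B₁ B₂ * ρ).trace).re) :
    ((acomm A₀ A₁ ^ 2 * ptraceB ρ).trace).re ≤ 4 * (3 + 2 * Real.sqrt 2) * ε ∧
    ((acomm (A₀ + A₁) A₂ ^ 2 * ptraceB ρ).trace).re ≤ 8 * (9 + 4 * Real.sqrt 2) * ε := by
  obtain ⟨T, hT⟩ : ∃ T : Matrix (Fin m × Fin n) (Fin m × Fin n) ℂ, ρ = T * Tᴴ := by
    open scoped MatrixOrder in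
    exact CStarAlgebra.nonneg_iff_eq_mul_star_self.mp hρ.nonneg
  have hermA : ∀ {A : Matrix (Fin m) (Fin m) ℂ}, A.IsHermitian →
      (A ⊗ₖ (1 : Matrix (Fin n) (Fin n) ℂ)).IsHermitian := fun {A} hA => by
    rw [Matrix.IsHermitian, conjTranspose_kronecker, hA.eq, conjTranspose_one]
  have hermB : ∀ {B : Matrix (Fin n) (Fin n) ℂ}, B.IsHermitian →
      ((1 : Matrix (Fin m) (Fin m) ℂ) ⊗ₖ B).IsHermitian := fun {B} hB => by
    rw [Matrix.IsHermitian, conjTranspose_kronecker, hB.eq, conjTranspose_one]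
  have sqA : ∀ {A : Matrix (Fin m) (Fin m) ℂ}, A ^ 2 = 1 →
      (A ⊗ₖ (1 : Matrix (Fin n) (Fin n) ℂ)) * (A ⊗ₖ 1) = 1 := fun {A} hA => by
    rw [← mul_kronecker_mul, ← sq, hA, Matrix.one_mul, one_kronecker_one]
  have sqB : ∀ {B : Matrix (Fin n) (Fin n) ℂ}, B ^ 2 = 1 →
      ((1 : Matrix (Fin m) (Fin m) ℂ) ⊗ₖ B) * (1 ⊗ₖ B) = 1 := fun {B} hB => by
    rw [← mul_kronecker_mul, ← sq B, hB, Matrix.one_mul, one_kronecker_one]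
  have comm : ∀ (A : Matrix (Fin m) (Fin m) ℂ) (B : Matrix (Fin n) (Fin n) ℂ),
      ((1 : Matrix (Fin m) (Fin m) ℂ) ⊗ₖ B) * (A ⊗ₖ 1) = (A ⊗ₖ 1) * (1 ⊗ₖ B) := fun A B => by
    simp only [← mul_kronecker_mul, Matrix.one_mul, Matrix.mul_one]
  have kron_sub : ∀ (A : Matrix (Fin m) (Fin m) ℂ) (B C : Matrix (Fin n) (Fin n) ℂ),
      A ⊗ₖ (B - C) = A ⊗ₖ B - A ⊗ₖ C := fun A B C => by
    ext; simp only [kroneckerMap_apply, Matrix.sub_apply, mul_sub]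
  have hs : Real.sqrt 2 * Real.sqrt 2 = 2 := Real.mul_self_sqrt (by norm_num)
  have ht2 : (2 * ((Real.sqrt 2 / 2 : ℝ) : ℂ)) = ((Real.sqrt 2 : ℝ) : ℂ) := by
    push_cast; ring
  have key := acomm_bounds (t := Real.sqrt 2 / 2) (by positivity) (by linarith) hε
    (hermA hA₀) (hermA hA₁) (hermA hA₂) (hermB hB₀) (hermB hB₁) (hermB hB₂)
    (sqA hA₀sq) (sqA hA₁sq) (sqA hA₂sq) (sqB hB₀sq) (sqB hB₁sq) (sqB hB₂sq)
    (comm _ _) (comm _ _) (comm _ _) (comm _ _) (comm _ _) (comm _ _) (comm _ _) (comm _ _)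
    T (hT ▸ hρtr) (by
      rw [← hT]
      convert hviol using 5
      rw [ht2, bellOpSqrt2]
      simp only [Matrix.mul_add, Matrix.mul_sub, Matrix.mul_smul, ← mul_kronecker_mul,
        Matrix.one_mul, Matrix.mul_one, kronecker_add, kronecker_smul, kron_sub])
  have hac : ∀ {M N : Matrix (Fin m) (Fin m) ℂ}, M.IsHermitian → N.IsHermitian →
      (acomm M N).IsHermitian := fun {M N} hM hN => by
    rw [Matrix.IsHermitian, acomm, conjTranspose_add, conjTranspose_mul, conjTranspose_mul, hM.eq,
      hN.eq, add_comm]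
  have red : ∀ H : Matrix (Fin m) (Fin m) ℂ,
      ((H ^ 2 * ptraceB ρ).trace).re =
        (((H ⊗ₖ (1 : Matrix (Fin n) (Fin n) ℂ)) * (H ⊗ₖ 1) * (T * Tᴴ)).trace).re := fun H => by
    rw [trace_mul_ptraceB, ← mul_kronecker_mul, Matrix.one_mul, sq, hT]
  rw [red, red,
    trace_sq_mul_eq (hermA (hac hA₀ hA₁)), trace_sq_mul_eq (hermA (hac (hA₀.add hA₁) hA₂))]
  have e1 : acomm A₀ A₁ ⊗ₖ (1 : Matrix (Fin n) (Fin n) ℂ) =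
      (A₀ ⊗ₖ 1) * (A₁ ⊗ₖ 1) + (A₁ ⊗ₖ 1) * (A₀ ⊗ₖ 1) := by
    simp only [acomm, ← mul_kronecker_mul, Matrix.one_mul, add_kronecker]
  have e2 : acomm (A₀ + A₁) A₂ ⊗ₖ (1 : Matrix (Fin n) (Fin n) ℂ) =
      (A₀ ⊗ₖ 1 + A₁ ⊗ₖ 1) * (A₂ ⊗ₖ 1) + (A₂ ⊗ₖ 1) * (A₀ ⊗ₖ 1 + A₁ ⊗ₖ 1) := by
    simp only [acomm, ← mul_kronecker_mul, Matrix.one_mul, ← add_kronecker]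
  rw [e1, e2]
  exact ⟨key.1.trans_eq (by ring), key.2.trans_eq (by ring)⟩

end
end

section
/- (Approximate perfect correlations.) Assume the hypotheses of the α = √2 robust self-testing setting with projective observables and Tr(Wρ) ≥ 6 − ε. Then the operators (A₀ − A₁) and B₂ are almost perfectly correlated, Tr(((A₀ − A₁)⊗B₂)·ρ) ≥ √2 − √(2ε), and by the Alice–Bob symmetry of the Bell functional likewise Tr((A₂⊗(B₀ − B₁))·ρ) ≥ √2 − √(2ε). -/
/-!
Write `⟨X⟩ = Re Tr(Xρ)` and `p = ⟨(A₀ - A₁) ⊗ B₂⟩`, `q = ⟨A₂ ⊗ (B₀ - B₁)⟩`,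
`r = ⟨(A₀ + A₁) ⊗ (B₀ + B₁)⟩`, so that `⟨W⟩ = r + √2 p + √2 q`. Put `a = ⟨{A₀, A₁} ⊗ 1⟩` and
`b = ⟨1 ⊗ {B₀, B₁}⟩`. For Hermitian `P`, `Q` and real `s`, `t`, positivity of
`⟨(s P ⊗ 1 - t 1 ⊗ Q)²⟩` (`expect_sq_nonneg`) yields

* `p² ≤ ⟨(A₀ - A₁)² ⊗ 1⟩ = 2 - a`, with `s = 1`, `t = p` and `B₂² = 1`;
* `q² ≤ ⟨1 ⊗ (B₀ - B₁)²⟩ = 2 - b`, with `s = q`, `t = 1` and `A₂² = 1`;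
* `2 r ≤ ⟨(A₀ + A₁)² ⊗ 1⟩ + ⟨1 ⊗ (B₀ + B₁)²⟩ = 4 + a + b`, with `s = t = 1`.

Inserting these in `⟨W⟩ ≥ 6 - ε` and completing squares gives
`(p - √2)² + (q - √2)² ≤ 2 ε`, which bounds both deviations by `√(2 ε)`.
-/

open Matrix
open scoped Kronecker ComplexOrder

noncomputable section

variable {m n : ℕ}

/-- The real part of the expectation value `Tr(Xρ)` of `X` in the state `ρ`. -/
def expect (ρ X : Matrix (Fin m × Fin n) (Fin m × Fin n) ℂ) : ℝ := ((X * ρ).trace).re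

lemma expect_add (ρ X Y : Matrix (Fin m × Fin n) (Fin m × Fin n) ℂ) :
    expect ρ (X + Y) = expect ρ X + expect ρ Y := by
  simp [expect, add_mul]

lemma expect_sub (ρ X Y : Matrix (Fin m × Fin n) (Fin m × Fin n) ℂ) :
    expect ρ (X - Y) = expect ρ X - expect ρ Y := by
  simp [expect, sub_mul]

lemma expect_smul (ρ X : Matrix (Fin m × Fin n) (Fin m × Fin n) ℂ) (c : ℝ) :
    expect ρ ((c : ℂ) • X) = c * expect ρ X := by
  simp [expect]

/-- Expanded form of `0 ≤ ⟨(s P ⊗ 1 - t 1 ⊗ Q)²⟩`. -/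
lemma expect_sq_nonneg {ρ : Matrix (Fin m × Fin n) (Fin m × Fin n) ℂ} (hρ : ρ.PosSemidef)
    {P : Matrix (Fin m) (Fin m) ℂ} {Q : Matrix (Fin n) (Fin n) ℂ}
    (hP : P.IsHermitian) (hQ : Q.IsHermitian) (s t : ℝ) :
    0 ≤ s ^ 2 * expect ρ ((P * P) ⊗ₖ (1 : Matrix (Fin n) (Fin n) ℂ))
      - 2 * (s * t) * expect ρ (P ⊗ₖ Q)
      + t ^ 2 * expect ρ ((1 : Matrix (Fin m) (Fin m) ℂ) ⊗ₖ (Q * Q)) := by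
  set M : Matrix (Fin m × Fin n) (Fin m × Fin n) ℂ :=
    (s : ℂ) • (P ⊗ₖ (1 : Matrix (Fin n) (Fin n) ℂ))
      - (t : ℂ) • ((1 : Matrix (Fin m) (Fin m) ℂ) ⊗ₖ Q) with hM
  have hMH : Mᴴ = M := by
    simp [hM, conjTranspose_kronecker, hP.eq, hQ.eq]
  have hnn : 0 ≤ expect ρ (M * M) := by
    have h := (hρ.mul_mul_conjTranspose_same M).trace_nonneg
    rw [hMH, trace_mul_comm, ← mul_assoc] at h
    exact (Complex.le_def.mp h).1
  have hexp : M * M = ((s ^ 2 : ℝ) : ℂ) • ((P * P) ⊗ₖ (1 : Matrix (Fin n) (Fin n) ℂ))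
      - ((2 * (s * t) : ℝ) : ℂ) • (P ⊗ₖ Q)
      + ((t ^ 2 : ℝ) : ℂ) • ((1 : Matrix (Fin m) (Fin m) ℂ) ⊗ₖ (Q * Q)) := by
    simp only [hM, sub_mul, mul_sub, smul_mul_assoc, mul_smul_comm, ← mul_kronecker_mul,
      one_mul, mul_one]
    push_cast
    module
  rwa [hexp, expect_add, expect_sub, expect_smul, expect_smul, expect_smul] at hnn

/-- approximate perfect correlations: with projective observables and
`Tr(Wρ) ≥ 6 − ε` at `α = √2`, `Tr(((A₀ − A₁)⊗B₂)ρ) ≥ √2 − √(2ε)` and likewise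
`Tr((A₂⊗(B₀ − B₁))ρ) ≥ √2 − √(2ε)`. -/
theorem approximate_perfect_correlations
    (A₀ A₁ A₂ : Matrix (Fin m) (Fin m) ℂ) (B₀ B₁ B₂ : Matrix (Fin n) (Fin n) ℂ)
    (hA₀ : A₀.IsHermitian) (hA₁ : A₁.IsHermitian) (hA₂ : A₂.IsHermitian)
    (hB₀ : B₀.IsHermitian) (hB₁ : B₁.IsHermitian) (hB₂ : B₂.IsHermitian)
    (hA₀sq : A₀ ^ 2 = 1) (hA₁sq : A₁ ^ 2 = 1) (hA₂sq : A₂ ^ 2 = 1)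
    (hB₀sq : B₀ ^ 2 = 1) (hB₁sq : B₁ ^ 2 = 1) (hB₂sq : B₂ ^ 2 = 1)
    (ρ : Matrix (Fin m × Fin n) (Fin m × Fin n) ℂ)
    (hρ : ρ.PosSemidef) (hρtr : ρ.trace = 1)
    (ε : ℝ) (hε : 0 ≤ ε)
    (hviol : 6 - ε ≤ ((bellOpSqrt2 A₀ A₁ A₂ B₀ B₁ B₂ * ρ).trace).re) :
    Real.sqrt 2 - Real.sqrt (2 * ε) ≤ ((((A₀ - A₁) ⊗ₖ B₂) * ρ).trace).re ∧
    Real.sqrt 2 - Real.sqrt (2 * ε) ≤ (((A₂ ⊗ₖ (B₀ - B₁)) * ρ).trace).re := by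
  have hs2 : Real.sqrt 2 ^ 2 = 2 := Real.sq_sqrt (by norm_num)
  have h1 : expect ρ ((1 : Matrix (Fin m) (Fin m) ℂ) ⊗ₖ (1 : Matrix (Fin n) (Fin n) ℂ)) = 1 := by
    simp [expect, hρtr]
  rw [pow_two] at hA₀sq hA₁sq hA₂sq hB₀sq hB₁sq hB₂sq
  change Real.sqrt 2 - Real.sqrt (2 * ε) ≤ expect ρ ((A₀ - A₁) ⊗ₖ B₂) ∧
    Real.sqrt 2 - Real.sqrt (2 * ε) ≤ expect ρ (A₂ ⊗ₖ (B₀ - B₁))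
  change 6 - ε ≤ expect ρ (bellOpSqrt2 A₀ A₁ A₂ B₀ B₁ B₂) at hviol
  have hW : bellOpSqrt2 A₀ A₁ A₂ B₀ B₁ B₂ = (A₀ + A₁) ⊗ₖ (B₀ + B₁)
      + ((Real.sqrt 2 : ℝ) : ℂ) • ((A₀ - A₁) ⊗ₖ B₂)
      + ((Real.sqrt 2 : ℝ) : ℂ) • (A₂ ⊗ₖ (B₀ - B₁)) := by
    ext ⟨i, k⟩ ⟨j, l⟩
    simp [bellOpSqrt2, kroneckerMap_apply]
    ring
  rw [hW, expect_add, expect_add, expect_smul, expect_smul] at hviol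
  -- Since the observables square to `1`, the squares of `A₀ ± A₁` and `B₀ ± B₁` have expectations
  -- `2 ± a` and `2 ± b`.
  set a := expect ρ ((A₀ * A₁ + A₁ * A₀) ⊗ₖ (1 : Matrix (Fin n) (Fin n) ℂ)) with ha
  set b := expect ρ ((1 : Matrix (Fin m) (Fin m) ℂ) ⊗ₖ (B₀ * B₁ + B₁ * B₀)) with hb
  have hAm : expect ρ (((A₀ - A₁) * (A₀ - A₁)) ⊗ₖ (1 : Matrix (Fin n) (Fin n) ℂ)) = 2 - a := by
    have h : ((A₀ - A₁) * (A₀ - A₁)) ⊗ₖ (1 : Matrix (Fin n) (Fin n) ℂ)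
        = (1 : Matrix (Fin m) (Fin m) ℂ) ⊗ₖ (1 : Matrix (Fin n) (Fin n) ℂ) + 1 ⊗ₖ 1
          - (A₀ * A₁ + A₁ * A₀) ⊗ₖ (1 : Matrix (Fin n) (Fin n) ℂ) := by
      simp only [sub_mul, mul_sub, hA₀sq, hA₁sq]
      ext ⟨i, k⟩ ⟨j, l⟩
      simp only [kroneckerMap_apply, Matrix.sub_apply, Matrix.add_apply]
      ring
    rw [h, expect_sub, expect_add, h1]; ring
  have hAp : expect ρ (((A₀ + A₁) * (A₀ + A₁)) ⊗ₖ (1 : Matrix (Fin n) (Fin n) ℂ)) = 2 + a := by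
    have h : ((A₀ + A₁) * (A₀ + A₁)) ⊗ₖ (1 : Matrix (Fin n) (Fin n) ℂ)
        = (1 : Matrix (Fin m) (Fin m) ℂ) ⊗ₖ (1 : Matrix (Fin n) (Fin n) ℂ) + 1 ⊗ₖ 1
          + (A₀ * A₁ + A₁ * A₀) ⊗ₖ (1 : Matrix (Fin n) (Fin n) ℂ) := by
      simp only [add_mul, mul_add, hA₀sq, hA₁sq]
      ext ⟨i, k⟩ ⟨j, l⟩
      simp only [kroneckerMap_apply, Matrix.add_apply]
      ring
    rw [h, expect_add, expect_add, h1]; ring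
  have hBm : expect ρ ((1 : Matrix (Fin m) (Fin m) ℂ) ⊗ₖ ((B₀ - B₁) * (B₀ - B₁))) = 2 - b := by
    have h : (1 : Matrix (Fin m) (Fin m) ℂ) ⊗ₖ ((B₀ - B₁) * (B₀ - B₁))
        = (1 : Matrix (Fin m) (Fin m) ℂ) ⊗ₖ (1 : Matrix (Fin n) (Fin n) ℂ) + 1 ⊗ₖ 1
          - (1 : Matrix (Fin m) (Fin m) ℂ) ⊗ₖ (B₀ * B₁ + B₁ * B₀) := by
      simp only [sub_mul, mul_sub, hB₀sq, hB₁sq]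
      ext ⟨i, k⟩ ⟨j, l⟩
      simp only [kroneckerMap_apply, Matrix.sub_apply, Matrix.add_apply]
      ring
    rw [h, expect_sub, expect_add, h1]; ring
  have hBp : expect ρ ((1 : Matrix (Fin m) (Fin m) ℂ) ⊗ₖ ((B₀ + B₁) * (B₀ + B₁))) = 2 + b := by
    have h : (1 : Matrix (Fin m) (Fin m) ℂ) ⊗ₖ ((B₀ + B₁) * (B₀ + B₁))
        = (1 : Matrix (Fin m) (Fin m) ℂ) ⊗ₖ (1 : Matrix (Fin n) (Fin n) ℂ) + 1 ⊗ₖ 1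
          + (1 : Matrix (Fin m) (Fin m) ℂ) ⊗ₖ (B₀ * B₁ + B₁ * B₀) := by
      simp only [add_mul, mul_add, hB₀sq, hB₁sq]
      ext ⟨i, k⟩ ⟨j, l⟩
      simp only [kroneckerMap_apply, Matrix.add_apply]
      ring
    rw [h, expect_add, expect_add, h1]; ring
  set p := expect ρ ((A₀ - A₁) ⊗ₖ B₂) with hp
  set q := expect ρ (A₂ ⊗ₖ (B₀ - B₁)) with hq
  have hp2 := expect_sq_nonneg hρ (hA₀.sub hA₁) hB₂ 1 p
  have hq2 := expect_sq_nonneg hρ hA₂ (hB₀.sub hB₁) q 1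
  have hr := expect_sq_nonneg hρ (hA₀.add hA₁) (hB₀.add hB₁) 1 1
  rw [hAm, hB₂sq, h1, ← hp] at hp2
  rw [hBm, hA₂sq, h1, ← hq] at hq2
  rw [hAp, hBp] at hr
  have key : (Real.sqrt 2 - p) ^ 2 + (Real.sqrt 2 - q) ^ 2 ≤ 2 * ε := by
    nlinarith
  constructor
  · have := Real.le_sqrt_of_sq_le (show (Real.sqrt 2 - p) ^ 2 ≤ 2 * ε by
      linarith [sq_nonneg (Real.sqrt 2 - q)])
    linarith
  · have := Real.le_sqrt_of_sq_le (show (Real.sqrt 2 - q) ^ 2 ≤ 2 * ε by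
      linarith [sq_nonneg (Real.sqrt 2 - p)])
    linarith

end
end

section
/- (Approximate correlation of the sums.) Assume the hypotheses of the α = √2 robust self-testing setting with projective observables and Tr(Wρ) ≥ 6 − ε. Then the operators (A₀ + A₁) and (B₀ + B₁) are almost perfectly correlated: Tr(((A₀ + A₁)⊗(B₀ + B₁))·ρ) ≥ 2 − 2(1 + 2√2)·√ε. -/
/-!
Write `S_A = A₀ + A₁`, `D_A = A₀ - A₁` and likewise `S_B`, `D_B`, and let `⟨X⟩ = Re Tr(Xρ)`.
Then `W = S_A ⊗ S_B + √2 D_A ⊗ B₂ + √2 A₂ ⊗ D_B`, and `S² + D² = 4` on both sides.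
Every correlation obeys `2 c d ⟨M ⊗ N⟩ ≤ c² ⟨M² ⊗ 1⟩ + d² ⟨1 ⊗ N²⟩`
(`two_mul_bellExpect_kronecker_le`), because `⟨X²⟩ ≥ 0` for Hermitian `X`.

Put `w = ⟨S_A ⊗ S_B⟩`. The bound for `S_A ⊗ S_B` gives `⟨D_A²⟩ + ⟨D_B²⟩ ≤ 8 - 2w`, and the bounds for
the other two terms, with weight `u = √(4 - w)`, give `⟨D_A ⊗ B₂⟩ + ⟨A₂ ⊗ D_B⟩ ≤ 2u`. Hence
`6 - ε ≤ w + 2√2 u = 6 - (u - √2)²`, so `u ≤ √2 + √ε` and `w ≥ 2 - 2√2 √ε - ε`. This suffices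
when `√ε ≤ 2 + 2√2`; for larger `ε` the trivial bound `w ≥ -4` is enough.
-/

open Matrix
open scoped Kronecker ComplexOrder

noncomputable section

variable {m n : ℕ}

/-- The real part of the expectation value `Tr(Xρ)`. -/
def bellExpect (ρ X : Matrix (Fin m × Fin n) (Fin m × Fin n) ℂ) : ℝ := ((X * ρ).trace).re

lemma bellExpect_add (ρ X Y : Matrix (Fin m × Fin n) (Fin m × Fin n) ℂ) :
    bellExpect ρ (X + Y) = bellExpect ρ X + bellExpect ρ Y := by
  simp [bellExpect, Matrix.add_mul]

lemma bellExpect_sub (ρ X Y : Matrix (Fin m × Fin n) (Fin m × Fin n) ℂ) :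
    bellExpect ρ (X - Y) = bellExpect ρ X - bellExpect ρ Y := by
  simp [bellExpect, Matrix.sub_mul]

lemma bellExpect_smul (ρ X : Matrix (Fin m × Fin n) (Fin m × Fin n) ℂ) (c : ℝ) :
    bellExpect ρ ((c : ℂ) • X) = c * bellExpect ρ X := by
  simp [bellExpect]

lemma bellExpect_mul_self_nonneg {ρ X : Matrix (Fin m × Fin n) (Fin m × Fin n) ℂ}
    (hρ : ρ.PosSemidef) (hX : X.IsHermitian) : 0 ≤ bellExpect ρ (X * X) := by
  have h := (hρ.mul_mul_conjTranspose_same X).trace_nonneg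
  rw [hX.eq, Matrix.trace_mul_comm, ← Matrix.mul_assoc] at h
  exact (Complex.le_def.1 h).1

/-- Weighted Cauchy–Schwarz bound, from the square of `c M ⊗ 1 - d 1 ⊗ N`. -/
lemma two_mul_bellExpect_kronecker_le {ρ : Matrix (Fin m × Fin n) (Fin m × Fin n) ℂ}
    (hρ : ρ.PosSemidef) {M : Matrix (Fin m) (Fin m) ℂ} {N : Matrix (Fin n) (Fin n) ℂ}
    (hM : M.IsHermitian) (hN : N.IsHermitian) (c d : ℝ) :
    2 * c * d * bellExpect ρ (M ⊗ₖ N) ≤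
      c ^ 2 * bellExpect ρ ((M * M) ⊗ₖ 1) + d ^ 2 * bellExpect ρ (1 ⊗ₖ (N * N)) := by
  have hX : ((c : ℂ) • (M ⊗ₖ (1 : Matrix (Fin n) (Fin n) ℂ)) -
      (d : ℂ) • ((1 : Matrix (Fin m) (Fin m) ℂ) ⊗ₖ N)).IsHermitian := by
    simp [Matrix.IsHermitian, Matrix.conjTranspose_kronecker, hM.eq, hN.eq]
  have h := bellExpect_mul_self_nonneg hρ hX
  have e : ((c : ℂ) • (M ⊗ₖ (1 : Matrix (Fin n) (Fin n) ℂ)) -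
      (d : ℂ) • ((1 : Matrix (Fin m) (Fin m) ℂ) ⊗ₖ N)) *
      ((c : ℂ) • (M ⊗ₖ (1 : Matrix (Fin n) (Fin n) ℂ)) -
      (d : ℂ) • ((1 : Matrix (Fin m) (Fin m) ℂ) ⊗ₖ N)) =
      ((c ^ 2 : ℝ) : ℂ) • ((M * M) ⊗ₖ (1 : Matrix (Fin n) (Fin n) ℂ)) -
      ((2 * c * d : ℝ) : ℂ) • (M ⊗ₖ N) +
      ((d ^ 2 : ℝ) : ℂ) • ((1 : Matrix (Fin m) (Fin m) ℂ) ⊗ₖ (N * N)) := by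
    simp only [Matrix.sub_mul, Matrix.mul_sub, Matrix.smul_mul, Matrix.mul_smul,
      ← Matrix.mul_kronecker_mul, Matrix.one_mul, Matrix.mul_one]
    push_cast
    module
  rw [e, bellExpect_add, bellExpect_sub, bellExpect_smul, bellExpect_smul, bellExpect_smul] at h
  linarith

/-- The parallelogram law for two involutions: `(A + B)² + (A - B)² = 4`. -/
lemma sum_sq_add_diff_sq {d : ℕ} {A B : Matrix (Fin d) (Fin d) ℂ}
    (hA : A ^ 2 = 1) (hB : B ^ 2 = 1) :
    (A - B) * (A - B) + (A + B) * (A + B) = ((4 : ℝ) : ℂ) • 1 := by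
  have : (A - B) * (A - B) + (A + B) * (A + B) = (2 : ℂ) • A ^ 2 + (2 : ℂ) • B ^ 2 := by
    simp only [pow_two, Matrix.sub_mul, Matrix.mul_sub, Matrix.add_mul, Matrix.mul_add]
    module
  rw [this, hA, hB]
  push_cast
  module

/-- approximate correlation of the sums: with projective observables and
`Tr(Wρ) ≥ 6 − ε` at `α = √2`, `Tr(((A₀ + A₁)⊗(B₀ + B₁))ρ) ≥ 2 − 2(1 + 2√2)·√ε`. -/
theorem approximate_correlation_of_sums
    (A₀ A₁ A₂ : Matrix (Fin m) (Fin m) ℂ) (B₀ B₁ B₂ : Matrix (Fin n) (Fin n) ℂ)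
    (hA₀ : A₀.IsHermitian) (hA₁ : A₁.IsHermitian) (hA₂ : A₂.IsHermitian)
    (hB₀ : B₀.IsHermitian) (hB₁ : B₁.IsHermitian) (hB₂ : B₂.IsHermitian)
    (hA₀sq : A₀ ^ 2 = 1) (hA₁sq : A₁ ^ 2 = 1) (hA₂sq : A₂ ^ 2 = 1)
    (hB₀sq : B₀ ^ 2 = 1) (hB₁sq : B₁ ^ 2 = 1) (hB₂sq : B₂ ^ 2 = 1)
    (ρ : Matrix (Fin m × Fin n) (Fin m × Fin n) ℂ)
    (hρ : ρ.PosSemidef) (hρtr : ρ.trace = 1)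
    (ε : ℝ) (hε : 0 ≤ ε)
    (hviol : 6 - ε ≤ ((bellOpSqrt2 A₀ A₁ A₂ B₀ B₁ B₂ * ρ).trace).re) :
    2 - 2 * (1 + 2 * Real.sqrt 2) * Real.sqrt ε ≤
      ((((A₀ + A₁) ⊗ₖ (B₀ + B₁)) * ρ).trace).re := by
  have h1 : bellExpect ρ ((1 : Matrix (Fin m) (Fin m) ℂ) ⊗ₖ (1 : Matrix (Fin n) (Fin n) ℂ)) = 1 := by
    simp [bellExpect, hρtr]
  have hW : bellOpSqrt2 A₀ A₁ A₂ B₀ B₁ B₂ = (A₀ + A₁) ⊗ₖ (B₀ + B₁) +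
      ((Real.sqrt 2 : ℝ) : ℂ) • ((A₀ - A₁) ⊗ₖ B₂) +
      ((Real.sqrt 2 : ℝ) : ℂ) • (A₂ ⊗ₖ (B₀ - B₁)) := by
    ext ⟨i, k⟩ ⟨j, l⟩
    simp only [bellOpSqrt2, Matrix.add_apply, Matrix.smul_apply, Matrix.kroneckerMap_apply,
      Matrix.sub_apply, smul_eq_mul]
    ring
  change 6 - ε ≤ bellExpect ρ (bellOpSqrt2 A₀ A₁ A₂ B₀ B₁ B₂) at hviol
  rw [hW, bellExpect_add, bellExpect_add, bellExpect_smul, bellExpect_smul] at hviol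
  change _ ≤ bellExpect ρ ((A₀ + A₁) ⊗ₖ (B₀ + B₁))
  have hSA := hA₀.add hA₁
  have hSB := hB₀.add hB₁
  have hDA := hA₀.sub hA₁
  have hDB := hB₀.sub hB₁
  have key1 := two_mul_bellExpect_kronecker_le hρ hDA hB₂
  have key2 := two_mul_bellExpect_kronecker_le hρ hA₂ hDB
  have key3 := two_mul_bellExpect_kronecker_le hρ hSA hSB
  rw [← pow_two B₂, hB₂sq, h1] at key1
  rw [← pow_two A₂, hA₂sq, h1] at key2
  have eA : bellExpect ρ (((A₀ - A₁) * (A₀ - A₁)) ⊗ₖ (1 : Matrix (Fin n) (Fin n) ℂ)) =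
      4 - bellExpect ρ (((A₀ + A₁) * (A₀ + A₁)) ⊗ₖ (1 : Matrix (Fin n) (Fin n) ℂ)) := by
    rw [eq_sub_iff_add_eq, ← bellExpect_add, ← Matrix.add_kronecker,
      sum_sq_add_diff_sq hA₀sq hA₁sq, Matrix.smul_kronecker, bellExpect_smul, h1, mul_one]
  have eB : bellExpect ρ ((1 : Matrix (Fin m) (Fin m) ℂ) ⊗ₖ ((B₀ - B₁) * (B₀ - B₁))) =
      4 - bellExpect ρ ((1 : Matrix (Fin m) (Fin m) ℂ) ⊗ₖ ((B₀ + B₁) * (B₀ + B₁))) := by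
    rw [eq_sub_iff_add_eq, ← bellExpect_add, ← Matrix.kronecker_add,
      sum_sq_add_diff_sq hB₀sq hB₁sq, Matrix.kronecker_smul, bellExpect_smul, h1, mul_one]
  rw [eA] at key1
  rw [eB] at key2
  generalize bellExpect ρ ((A₀ + A₁) ⊗ₖ (B₀ + B₁)) = w at *
  generalize bellExpect ρ ((A₀ - A₁) ⊗ₖ B₂) = p at *
  generalize bellExpect ρ (A₂ ⊗ₖ (B₀ - B₁)) = q at *
  generalize bellExpect ρ (((A₀ + A₁) * (A₀ + A₁)) ⊗ₖ (1 : Matrix (Fin n) (Fin n) ℂ)) = x at *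
  generalize bellExpect ρ ((1 : Matrix (Fin m) (Fin m) ℂ) ⊗ₖ ((B₀ + B₁) * (B₀ + B₁))) = y at *
  have hx : x ≤ 4 := by linarith [key1 1 0]
  have hy : y ≤ 4 := by linarith [key2 0 1]
  have hw : 2 * w ≤ x + y := by linarith [key3 1 1]
  have hw' : -4 ≤ w := by linarith [key3 1 (-1)]
  obtain ⟨u, hu, hu2⟩ : ∃ u : ℝ, 0 ≤ u ∧ u ^ 2 = 4 - w :=
    ⟨√(4 - w), Real.sqrt_nonneg _, Real.sq_sqrt (by linarith)⟩
  have hs := Real.sqrt_nonneg ε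
  have hs2 := Real.sq_sqrt hε
  have ht := Real.sqrt_nonneg 2
  have ht2 : √2 ^ 2 = (2 : ℝ) := Real.sq_sqrt (by norm_num)
  generalize √ε = s at *
  generalize √2 = t at *
  have hus : u ≤ t + s := by
    rcases hu.eq_or_lt with h0 | hpos
    · linarith
    have hpq : p + q ≤ 2 * u := by
      have k1 := key1 1 u
      have k2 := key2 u 1
      have : u * (p + q) ≤ u * (2 * u) := by nlinarith
      exact le_of_mul_le_mul_left this hpos
    have hsq : (u - t) ^ 2 ≤ s ^ 2 := by nlinarith [mul_le_mul_of_nonneg_left hpq ht]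
    linarith [abs_le_of_sq_le_sq' hsq hs]
  have hlow : 2 - 2 * t * s - s ^ 2 ≤ w := by nlinarith
  have ht1 : 1 ≤ t := by nlinarith
  rcases le_total s (2 + 2 * t) with h | h
  · nlinarith
  · nlinarith

end
end

section
/- (Lemma on the X-correlator of the extracted state.) Assume the hypotheses of the α = √2 robust self-testing setting with projective observables and Tr(Wρ) ≥ 6 − ε. Define C_X := (1/64)·[3(A₀+A₁) − (A₁A₀A₁ + A₀A₁A₀) − 3A₂(A₀+A₁)A₂ + A₂(A₁A₀A₁ + A₀A₁A₀)A₂] ⊗ [3(B₀+B₁) − (B₁B₀B₁ + B₀B₁B₀)]. Then Tr(C_X·ρ) ≥ 1 − (7 + 5√2)·√ε. -/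
/-!
Write `p = A₀ + A₁`, `M = A₀ - A₁`, `S = B₀ + B₁`, `D = B₀ - B₁`, all acting on the joint space, so
that `p² + M² = S² + D² = 4`, `SD = -DS`, and operators of different parties commute. The Bell
operator has the sum-of-squares decomposition (`bell_sos`)
`2 (6 - W) = (p - S)² + (M - √2 B₂)² + (D - √2 A₂)²`.
With the seminorm `q x = √(Tr (x† x ρ))`, for which left multiplication by an observable is an
isometry, the hypothesis therefore makes `q` of each of the three brackets at most `√(2ε)`.

The two factors of `C_X` are built from `F = 6p - p³` and `G = 6S - S³`:
`64 C_X = (F - A₂ F A₂) G`. Since `2 - p² = (M + √2 B₂)(M - √2 B₂)` and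
`2 - S² = (D + √2 A₂)(D - √2 A₂)` are `q`-small, `F ≈ 4p ≈ 4S ≈ G` and `S² ≈ 2`, whence `F G ≈ 32`.
Moreover `√2 A₂ ≈ D` anticommutes with `G` and commutes with `F`, which gives `A₂ F A₂ G ≈ -32`.
Keeping track of the errors (`bell_core`) bounds `q (64 C_X - 64)`, and Cauchy–Schwarz for the form
`Tr (x† y ρ)` turns this into the bound on `Tr (C_X ρ)`.
-/


open Matrix
open scoped Kronecker ComplexOrder

noncomputable section

variable {m n : ℕ}

/-- The operator `C_X` built from the observables, whose expectation is the `X⊗X`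
correlator of the extracted two-qubit state. -/
def CX (A₀ A₁ A₂ : Matrix (Fin m) (Fin m) ℂ) (B₀ B₁ : Matrix (Fin n) (Fin n) ℂ) :
    Matrix (Fin m × Fin n) (Fin m × Fin n) ℂ :=
  ((64 : ℂ)⁻¹) •
    (((3 : ℂ) • (A₀ + A₁) - (A₁ * A₀ * A₁ + A₀ * A₁ * A₀) -
        (3 : ℂ) • (A₂ * (A₀ + A₁) * A₂) + A₂ * (A₁ * A₀ * A₁ + A₀ * A₁ * A₀) * A₂) ⊗ₖ
      ((3 : ℂ) • (B₀ + B₁) - (B₁ * B₀ * B₁ + B₀ * B₁ * B₀)))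

/-- The operator `C_Z` built from the observables, whose expectation is the `Z⊗Z`
correlator of the extracted two-qubit state. -/
def CZ (A₂ : Matrix (Fin m) (Fin m) ℂ) (B₀ B₁ : Matrix (Fin n) (Fin n) ℂ) :
    Matrix (Fin m × Fin n) (Fin m × Fin n) ℂ :=
  ((((4 * Real.sqrt 2)⁻¹ : ℝ)) : ℂ) •
    (A₂ ⊗ₖ ((3 : ℂ) • (B₀ - B₁) - (B₁ * B₀ * B₁ - B₀ * B₁ * B₀)))

/-- The cubic `3(a+b) - (bab + aba)` in two involutions is `6s - s³` with `s = a + b`, written here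
so that the term `2 - s²`, which is small in the application, is a factor of the second summand. -/
theorem cubic_eq {R : Type*} [Ring R] {a b : R} (ha : a * a = 1) (hb : b * b = 1) :
    3 * (a + b) - (b * a * b + a * b * a)
      = 4 * (a + b) + (a + b) * (2 - (a + b) * (a + b)) := by
  linear_combination (norm := noncomm_ring)
    a * ha + b * hb + ha * b + b * ha + a * hb + hb * a

theorem sq_add_sq_eq {R : Type*} [Ring R] {a b : R} (ha : a * a = 1) (hb : b * b = 1) :
    (a + b) * (a + b) + (a - b) * (a - b) = 4 := by
  have : (a + b) * (a + b) + (a - b) * (a - b) = a * a + a * a + (b * b + b * b) := by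
    noncomm_ring
  rw [this, ha, hb]; norm_num

theorem add_mul_sub_eq {R : Type*} [Ring R] {a b : R} (ha : a * a = 1) (hb : b * b = 1) :
    (a + b) * (a - b) = -((a - b) * (a + b)) := by
  linear_combination (norm := noncomm_ring) 2 * ha - 2 * hb

theorem two_sub_sq_eq {R : Type*} [Ring R] {p M y : R} (h : p * p + M * M = 4) (hy : y * y = 2)
    (hc : Commute M y) : 2 - p * p = (M + y) * (M - y) := by
  have h1 : (M + y) * (M - y) = M * M - y * y := (hc.mul_self_sub_mul_self_eq).symm
  rw [h1, hy, eq_sub_of_add_eq h]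
  have : (4 : R) = 2 + 2 := by norm_num
  rw [this]; abel

/-- The error analysis of the self-test, for two commuting families of involutions in a real
algebra and a seminorm invariant under left multiplication by each of them: if the three
defects `(a₀ + a₁) - (b₀ + b₁)`, `(a₀ - a₁) - √2 b₂` and `(b₀ - b₁) - √2 a₂` have seminorm at most
`r`, then the (64-fold) `X`-correlator is within `64 (5 + 7√2/2) r` of `64`. -/
theorem bell_core {R : Type*} [Ring R] [Algebra ℝ R] (q : Seminorm ℝ R)
    {a₀ a₁ a₂ b₀ b₁ b₂ : R} {r : ℝ}
    (ha₀ : a₀ * a₀ = 1) (ha₁ : a₁ * a₁ = 1) (ha₂ : a₂ * a₂ = 1)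
    (hb₀ : b₀ * b₀ = 1) (hb₁ : b₁ * b₁ = 1) (hb₂ : b₂ * b₂ = 1)
    (h00 : Commute a₀ b₀) (h01 : Commute a₀ b₁) (h02 : Commute a₀ b₂)
    (h10 : Commute a₁ b₀) (h11 : Commute a₁ b₁) (h12 : Commute a₁ b₂)
    (h20 : Commute a₂ b₀) (h21 : Commute a₂ b₁)
    (qa₀ : ∀ x, q (a₀ * x) = q x) (qa₁ : ∀ x, q (a₁ * x) = q x) (qa₂ : ∀ x, q (a₂ * x) = q x)
    (qb₀ : ∀ x, q (b₀ * x) = q x) (qb₁ : ∀ x, q (b₁ * x) = q x) (qb₂ : ∀ x, q (b₂ * x) = q x)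
    (hr₁ : q (a₀ + a₁ - (b₀ + b₁)) ≤ r)
    (hr₂ : q (a₀ - a₁ - √2 • b₂) ≤ r)
    (hr₃ : q (b₀ - b₁ - √2 • a₂) ≤ r) :
    q ((3 * (a₀ + a₁) - (a₁ * a₀ * a₁ + a₀ * a₁ * a₀)
          - a₂ * (3 * (a₀ + a₁) - (a₁ * a₀ * a₁ + a₀ * a₁ * a₀)) * a₂)
        * (3 * (b₀ + b₁) - (b₁ * b₀ * b₁ + b₀ * b₁ * b₀)) - 64)
      ≤ 64 * (5 + 7 / 2 * √2) * r := by
  have c2 : √2 * √2 = (2 : ℝ) := Real.mul_self_sqrt (by norm_num)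
  have cpos : 0 < √2 := by positivity
  have hr : 0 ≤ r := (apply_nonneg q _).trans hr₁
  -- sums and differences of two `q`-isometries have `q`-norm at most `2`
  have qadd : ∀ u v : R, (∀ x, q (u * x) = q x) → (∀ x, q (v * x) = q x) →
      ∀ x, q ((u + v) * x) ≤ 2 * q x := by
    intro u v hu hv x
    rw [add_mul]
    have := map_add_le_add q (u * x) (v * x)
    rw [hu, hv] at this; linarith
  have qsub : ∀ u v : R, (∀ x, q (u * x) = q x) → (∀ x, q (v * x) = q x) →
      ∀ x, q ((u - v) * x) ≤ 2 * q x := by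
    intro u v hu hv x
    rw [sub_mul]
    have := map_sub_le_add q (u * x) (v * x)
    rw [hu, hv] at this; linarith
  have qnum : ∀ (k : ℕ) (x : R), q (k * x) = k * q x := by
    intro k x
    have : (k : R) * x = (k : ℝ) • x := by
      rw [Algebra.smul_def, map_natCast]
    rw [this, map_smul_eq_mul, Real.norm_natCast]
  have qcub : ∀ u v : R, (∀ x, q (u * x) = q x) → (∀ x, q (v * x) = q x) →
      ∀ x, q ((3 * (u + v) - (v * u * v + u * v * u)) * x) ≤ 8 * q x := by
    intro u v hu hv x
    have e : (3 * (u + v) - (v * u * v + u * v * u)) * x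
        = ((3 : ℕ) : R) * ((u + v) * x) - (v * (u * (v * x)) + u * (v * (u * x))) := by
      push_cast; noncomm_ring
    have h1 := map_sub_le_add q (((3 : ℕ) : R) * ((u + v) * x))
      (v * (u * (v * x)) + u * (v * (u * x)))
    have h2 := map_add_le_add q (v * (u * (v * x))) (u * (v * (u * x)))
    have h3 := qadd u v hu hv x
    rw [← e, qnum] at h1
    simp only [hu, hv] at h2
    push_cast at h1; linarith
  have qcub₁ := qcub a₀ a₁ qa₀ qa₁
  have qcub₂ := qcub b₀ b₁ qb₀ qb₁
  have hF := cubic_eq ha₀ ha₁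
  have hG := cubic_eq hb₀ hb₁
  have qp := qadd a₀ a₁ qa₀ qa₁
  have qS := qadd b₀ b₁ qb₀ qb₁
  have qM := qsub a₀ a₁ qa₀ qa₁
  have qD := qsub b₀ b₁ qb₀ qb₁
  have scal : ∀ x : R, (√2 • x) * (√2 • x) = 2 * (x * x) := by
    intro x
    rw [smul_mul_smul_comm, c2, ofNat_smul_eq_nsmul]
    simp [two_mul, two_smul]
  have cy : Commute (a₀ - a₁) (√2 • b₂) := (h02.sub_left h12).smul_right _
  have cz : Commute (b₀ - b₁) (√2 • a₂) := (h20.symm.sub_left h21.symm).smul_right _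
  have hA := two_sub_sq_eq (sq_add_sq_eq ha₀ ha₁) (by rw [scal, hb₂, mul_one]) cy
  have hB := two_sub_sq_eq (sq_add_sq_eq hb₀ hb₁) (by rw [scal, ha₂, mul_one]) cz
  have hSD := add_mul_sub_eq hb₀ hb₁
  have cpS : Commute (a₀ + a₁) (b₀ + b₁) := (h00.add_right h01).add_left (h10.add_right h11)
  have cpD : Commute (a₀ + a₁) (b₀ - b₁) := (h00.sub_right h01).add_left (h10.sub_right h11)
  have caS : Commute a₂ (b₀ + b₁) := h20.add_right h21
  generalize hFd : 3 * (a₀ + a₁) - (a₁ * a₀ * a₁ + a₀ * a₁ * a₀) = F at *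
  generalize hGd : 3 * (b₀ + b₁) - (b₁ * b₀ * b₁ + b₀ * b₁ * b₀) = G at *
  generalize a₀ + a₁ = p at *
  generalize b₀ + b₁ = S at *
  generalize a₀ - a₁ = M at *
  generalize b₀ - b₁ = D at *
  have kA : q (2 - p * p) ≤ (2 + √2) * r := by
    rw [hA, add_mul, smul_mul_assoc]
    refine (map_add_le_add q _ _).trans ?_
    rw [map_smul_eq_mul, qb₂, Real.norm_of_nonneg cpos.le]
    have := qM (M - √2 • b₂)
    nlinarith
  have kB : q (2 - S * S) ≤ (2 + √2) * r := by
    rw [hB, add_mul, smul_mul_assoc]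
    refine (map_add_le_add q _ _).trans ?_
    rw [map_smul_eq_mul, qa₂, Real.norm_of_nonneg cpos.le]
    have := qD (D - √2 • a₂)
    nlinarith
  have cFS : Commute F S := by
    rw [hF]
    exact ((Nat.cast_commute 4 S).mul_left cpS).add_left
      (cpS.mul_left (((Nat.cast_commute 2 S)).sub_left (cpS.mul_left cpS)))
  have cFD : Commute F D := by
    rw [hF]
    exact ((Nat.cast_commute 4 D).mul_left cpD).add_left
      (cpD.mul_left (((Nat.cast_commute 2 D)).sub_left (cpD.mul_left cpD)))
  have caG : Commute a₂ G := by
    rw [hG]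
    exact ((Nat.cast_commute 4 a₂).symm.mul_right caS).add_right
      (caS.mul_right (((Nat.cast_commute 2 a₂)).symm.sub_right (caS.mul_right caS)))
  -- `D` anticommutes with `S`, hence with the odd polynomial `G` in `S`
  have hGD : G * D = -(D * G) := by
    have h2 : S * S * D = D * (S * S) := by
      rw [mul_assoc, hSD, mul_neg, ← mul_assoc, hSD, neg_mul, neg_neg, mul_assoc]
    rw [hG]
    linear_combination (norm := noncomm_ring) 6 * hSD - S * h2 - hSD * (S * S)
  -- the telescoping identity behind `F G ≈ 32`
  have e1 : F * G - 32 = F * (S * (2 - S * S)) + ((4 : ℕ) : R) * (S * (p * (2 - p * p)))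
      + ((16 : ℕ) : R) * (S * (p - S)) - ((16 : ℕ) : R) * (2 - S * S) := by
    have h32 : (32 : R) = 16 * 2 := by norm_num
    have h16 : (16 : R) = 4 * 4 := by norm_num
    have h1 : F * S = S * F := cFS.eq
    have h3 : F * G = 4 * (F * S) + F * (S * (2 - S * S)) := by
      rw [hG]; noncomm_ring
    have h4 : S * F = 4 * (S * p) + S * (p * (2 - p * p)) := by
      conv_lhs => rw [hF]
      noncomm_ring
    rw [h3, h1, h4, h32]
    push_cast
    rw [h16]
    noncomm_ring
  have k1 : q (F * G - 32) ≤ (48 * (2 + √2) + 32) * r := by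
    have t1 := qcub₁ (S * (2 - S * S))
    have t2 := qS (2 - S * S)
    have t3 := qS (p * (2 - p * p))
    have t4 := qp (2 - p * p)
    have t5 := qS (p - S)
    have u1 := map_sub_le_add q (F * (S * (2 - S * S)) + ((4 : ℕ) : R) * (S * (p * (2 - p * p)))
      + ((16 : ℕ) : R) * (S * (p - S))) (((16 : ℕ) : R) * (2 - S * S))
    have u2 := map_add_le_add q (F * (S * (2 - S * S)) + ((4 : ℕ) : R) * (S * (p * (2 - p * p))))
      (((16 : ℕ) : R) * (S * (p - S)))
    have u3 := map_add_le_add q (F * (S * (2 - S * S))) (((4 : ℕ) : R) * (S * (p * (2 - p * p))))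
    rw [← e1] at u1
    simp only [qnum] at u1 u2 u3
    push_cast at u1 u2 u3
    linarith
  -- `√2 a₂` is exchanged for `D`, moved through `F G` at the cost of a sign, and exchanged back
  have e2 : √2 • (a₂ * F * a₂ * G + 32)
      = -(a₂ * (F * (G * (D - √2 • a₂)))) - a₂ * (D * (F * G - 32))
        - ((32 : ℕ) : R) * (a₂ * (D - √2 • a₂)) := by
    have h1 : a₂ * (F * (G * D)) = -(a₂ * (D * (F * G))) := by
      rw [hGD, mul_neg, mul_neg, ← mul_assoc F, cFD.eq, mul_assoc D]
    have h2 : a₂ * F * a₂ * G = a₂ * (F * (G * a₂)) := by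
      rw [mul_assoc, mul_assoc, caG.eq]
    have h3 : a₂ * (D * (F * G - 32)) = a₂ * (D * (F * G)) - 32 * (a₂ * D) := by
      rw [mul_sub, mul_sub, (Commute.ofNat_right D 32).eq, ← mul_assoc,
        ← mul_assoc a₂ 32, (Commute.ofNat_right a₂ 32).eq, mul_assoc, mul_assoc]
    rw [h2, h3]
    simp only [mul_sub, mul_smul_comm, h1, ha₂, smul_add, Nat.cast_ofNat, mul_one]
    abel
  have k2 : √2 * q (a₂ * F * a₂ * G + 32) ≤ 96 * r + 2 * ((48 * (2 + √2) + 32) * r) := by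
    have t1 := qcub₁ (G * (D - √2 • a₂))
    have t2 := qcub₂ (D - √2 • a₂)
    have t3 := qD (F * G - 32)
    have u1 := map_sub_le_add q (-(a₂ * (F * (G * (D - √2 • a₂)))) - a₂ * (D * (F * G - 32)))
      (((32 : ℕ) : R) * (a₂ * (D - √2 • a₂)))
    have u2 := map_sub_le_add q (-(a₂ * (F * (G * (D - √2 • a₂))))) (a₂ * (D * (F * G - 32)))
    rw [← e2, map_smul_eq_mul, Real.norm_of_nonneg cpos.le] at u1
    simp only [qnum, map_neg_eq_map, qa₂] at u1 u2
    push_cast at u1 u2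
    linarith
  have e3 : (F - a₂ * F * a₂) * G - 64 = (F * G - 32) - (a₂ * F * a₂ * G + 32) := by
    have : (64 : R) = 32 + 32 := by norm_num
    rw [this, sub_mul]; abel
  rw [e3]
  refine (map_sub_le_add q _ _).trans ?_
  -- after multiplication by `√2` the constants compare as `448 + 224√2 ≤ 448 + 320√2`
  refine le_of_mul_le_mul_left ?_ cpos
  have k1' := mul_le_mul_of_nonneg_left k1 cpos.le
  have : √2 * ((48 * (2 + √2) + 32) * r) + (96 * r + 2 * ((48 * (2 + √2) + 32) * r))
      ≤ √2 * (64 * (5 + 7 / 2 * √2) * r) := by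
    have : √2 * (64 * (5 + 7 / 2 * √2) * r) -
      (√2 * ((48 * (2 + √2) + 32) * r) + (96 * r + 2 * ((48 * (2 + √2) + 32) * r)))
      = 96 * √2 * r + 176 * (√2 * √2 - 2) * r := by ring
    rw [c2] at this
    have : 0 ≤ 96 * √2 * r := by positivity
    linarith
  linarith

/-- Sum-of-squares decomposition of twice the shifted Bell operator, `2 (6 - W)`. -/
theorem bell_sos_s17 {R : Type*} [Ring R] [Algebra ℝ R] {a₀ a₁ a₂ b₀ b₁ b₂ : R}
    (ha₀ : a₀ * a₀ = 1) (ha₁ : a₁ * a₁ = 1) (ha₂ : a₂ * a₂ = 1)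
    (hb₀ : b₀ * b₀ = 1) (hb₁ : b₁ * b₁ = 1) (hb₂ : b₂ * b₂ = 1)
    (h00 : Commute a₀ b₀) (h01 : Commute a₀ b₁) (h02 : Commute a₀ b₂)
    (h10 : Commute a₁ b₀) (h11 : Commute a₁ b₁) (h12 : Commute a₁ b₂)
    (h20 : Commute a₂ b₀) (h21 : Commute a₂ b₁) :
    (a₀ + a₁ - (b₀ + b₁)) * (a₀ + a₁ - (b₀ + b₁))
      + (a₀ - a₁ - √2 • b₂) * (a₀ - a₁ - √2 • b₂)
      + (b₀ - b₁ - √2 • a₂) * (b₀ - b₁ - √2 • a₂)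
      = (12 : ℝ) • (1 : R) - (2 : ℝ) • (a₀ * (b₀ + b₁ + √2 • b₂) + a₁ * (b₀ + b₁ - √2 • b₂)
          + √2 • (a₂ * (b₀ - b₁))) := by
  have c2 : √2 * √2 = (2 : ℝ) := Real.mul_self_sqrt (by norm_num)
  simp only [mul_add, add_mul, mul_sub, sub_mul, mul_smul_comm, smul_mul_assoc,
    ha₀, ha₁, ha₂, hb₀, hb₁, hb₂, h00.symm.eq, h01.symm.eq, h02.symm.eq, h10.symm.eq, h11.symm.eq,
    h12.symm.eq, h20.symm.eq, h21.symm.eq]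
  match_scalars <;> linarith

/-- The seminorm `q x = √(Tr (x† x ρ))` of a positive semidefinite `ρ`, together with the
Cauchy–Schwarz bound `|Re Tr (x ρ)| ≤ q x * q 1`. -/
theorem exists_state_seminorm {d : Type*} [Fintype d] [DecidableEq d]
    (ρ : Matrix d d ℂ) (hρ : ρ.PosSemidef) :
    ∃ q : Seminorm ℝ (Matrix d d ℂ),
      (∀ x, q x ^ 2 = ((xᴴ * x * ρ).trace).re) ∧
      ∀ x, |((x * ρ).trace).re| ≤ q x * q 1 := by
  let _ := ρ.toMatrixSeminormedAddCommGroup hρ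
  let _ := ρ.toMatrixInnerProductSpace hρ
  have hin : ∀ x y : Matrix d d ℂ, inner ℂ x y = (y * ρ * xᴴ).trace := fun _ _ => rfl
  refine ⟨(normSeminorm ℂ (Matrix d d ℂ)).restrictScalars ℝ, fun x => ?_, fun x => ?_⟩
  · change ‖x‖ ^ 2 = _
    rw [← inner_self_eq_norm_sq (𝕜 := ℂ) x, hin, Matrix.trace_mul_comm, ← Matrix.mul_assoc]
    rfl
  · change _ ≤ ‖x‖ * ‖(1 : Matrix d d ℂ)‖
    have h := norm_inner_le_norm (𝕜 := ℂ) (1 : Matrix d d ℂ) x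
    rw [hin, conjTranspose_one, Matrix.mul_one, mul_comm ‖_‖] at h
    exact (Complex.abs_re_le_norm _).trans h

/-- Lemma on the X-correlator: with projective observables and
`Tr(Wρ) ≥ 6 − ε` at `α = √2`, `Tr(C_X ρ) ≥ 1 − (7 + 5√2)·√ε`. -/
theorem CX_close_to_one
    (A₀ A₁ A₂ : Matrix (Fin m) (Fin m) ℂ) (B₀ B₁ B₂ : Matrix (Fin n) (Fin n) ℂ)
    (hA₀ : A₀.IsHermitian) (hA₁ : A₁.IsHermitian) (hA₂ : A₂.IsHermitian)
    (hB₀ : B₀.IsHermitian) (hB₁ : B₁.IsHermitian) (hB₂ : B₂.IsHermitian)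
    (hA₀sq : A₀ ^ 2 = 1) (hA₁sq : A₁ ^ 2 = 1) (hA₂sq : A₂ ^ 2 = 1)
    (hB₀sq : B₀ ^ 2 = 1) (hB₁sq : B₁ ^ 2 = 1) (hB₂sq : B₂ ^ 2 = 1)
    (ρ : Matrix (Fin m × Fin n) (Fin m × Fin n) ℂ)
    (hρ : ρ.PosSemidef) (hρtr : ρ.trace = 1)
    (ε : ℝ) (hε : 0 ≤ ε)
    (hviol : 6 - ε ≤ ((bellOpSqrt2 A₀ A₁ A₂ B₀ B₁ B₂ * ρ).trace).re) :
    1 - (7 + 5 * Real.sqrt 2) * Real.sqrt ε ≤ ((CX A₀ A₁ A₂ B₀ B₁ * ρ).trace).re := by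
  -- the observables of the two parties as commuting involutions on the joint space
  set a₀ : Matrix (Fin m × Fin n) (Fin m × Fin n) ℂ := A₀ ⊗ₖ 1 with ha₀
  set a₁ : Matrix (Fin m × Fin n) (Fin m × Fin n) ℂ := A₁ ⊗ₖ 1 with ha₁
  set a₂ : Matrix (Fin m × Fin n) (Fin m × Fin n) ℂ := A₂ ⊗ₖ 1 with ha₂
  set b₀ : Matrix (Fin m × Fin n) (Fin m × Fin n) ℂ := 1 ⊗ₖ B₀ with hb₀
  set b₁ : Matrix (Fin m × Fin n) (Fin m × Fin n) ℂ := 1 ⊗ₖ B₁ with hb₁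
  set b₂ : Matrix (Fin m × Fin n) (Fin m × Fin n) ℂ := 1 ⊗ₖ B₂ with hb₂
  have sqA : ∀ A : Matrix (Fin m) (Fin m) ℂ, A ^ 2 = 1 →
      (A ⊗ₖ (1 : Matrix (Fin n) (Fin n) ℂ)) * (A ⊗ₖ 1) = 1 := by
    intro A h
    rw [← mul_kronecker_mul, ← sq, h, Matrix.one_mul, one_kronecker_one]
  have sqB : ∀ B : Matrix (Fin n) (Fin n) ℂ, B ^ 2 = 1 →
      ((1 : Matrix (Fin m) (Fin m) ℂ) ⊗ₖ B) * (1 ⊗ₖ B) = 1 := by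
    intro B h
    rw [← mul_kronecker_mul, ← sq B, h, Matrix.one_mul, one_kronecker_one]
  have comm : ∀ (A : Matrix (Fin m) (Fin m) ℂ) (B : Matrix (Fin n) (Fin n) ℂ),
      Commute (A ⊗ₖ (1 : Matrix (Fin n) (Fin n) ℂ)) (1 ⊗ₖ B) := by
    intro A B
    simp only [Commute, SemiconjBy, ← mul_kronecker_mul, Matrix.one_mul, Matrix.mul_one]
  have hermA : ∀ A : Matrix (Fin m) (Fin m) ℂ, A.IsHermitian →
      (A ⊗ₖ (1 : Matrix (Fin n) (Fin n) ℂ)).IsHermitian := by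
    intro A h
    rw [Matrix.IsHermitian, conjTranspose_kronecker, h.eq, conjTranspose_one]
  have hermB : ∀ B : Matrix (Fin n) (Fin n) ℂ, B.IsHermitian →
      ((1 : Matrix (Fin m) (Fin m) ℂ) ⊗ₖ B).IsHermitian := by
    intro B h
    rw [Matrix.IsHermitian, conjTranspose_kronecker, h.eq, conjTranspose_one]
  have Ha₀ := hermA A₀ hA₀
  have Ha₁ := hermA A₁ hA₁
  have Ha₂ := hermA A₂ hA₂
  have Hb₀ := hermB B₀ hB₀
  have Hb₁ := hermB B₁ hB₁
  have Hb₂ := hermB B₂ hB₂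
  have Sa₀ := sqA A₀ hA₀sq
  have Sa₁ := sqA A₁ hA₁sq
  have Sa₂ := sqA A₂ hA₂sq
  have Sb₀ := sqB B₀ hB₀sq
  have Sb₁ := sqB B₁ hB₁sq
  have Sb₂ := sqB B₂ hB₂sq
  obtain ⟨q, hq, hq1⟩ := exists_state_seminorm ρ hρ
  have qiso : ∀ u : Matrix (Fin m × Fin n) (Fin m × Fin n) ℂ, u.IsHermitian → u * u = 1 →
      ∀ x, q (u * x) = q x := by
    intro u hu huu x
    rw [← sq_eq_sq₀ (apply_nonneg q _) (apply_nonneg q _), hq, hq, conjTranspose_mul, hu.eq,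
      Matrix.mul_assoc xᴴ, ← Matrix.mul_assoc u, huu, Matrix.one_mul]
  have q1 : q 1 = 1 := by
    have : q 1 ^ 2 = 1 := by simp [hq, hρtr]
    exact (pow_eq_one_iff_of_nonneg (apply_nonneg q 1) two_ne_zero).1 this
  have smulc : ∀ {k : Type} (c : ℝ) (X : Matrix k k ℂ), (c : ℂ) • X = c • X := by
    intro k c X
    exact Complex.coe_smul c X
  have subL : ∀ (X Y : Matrix (Fin m) (Fin m) ℂ) (Z : Matrix (Fin n) (Fin n) ℂ),
      (X - Y) ⊗ₖ Z = X ⊗ₖ Z - Y ⊗ₖ Z := by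
    intro X Y Z
    ext
    simp [sub_mul]
  have subR : ∀ (X : Matrix (Fin m) (Fin m) ℂ) (Y Z : Matrix (Fin n) (Fin n) ℂ),
      X ⊗ₖ (Y - Z) = X ⊗ₖ Y - X ⊗ₖ Z := by
    intro X Y Z
    ext
    simp [mul_sub]
  have mulL : ∀ X Y : Matrix (Fin m) (Fin m) ℂ,
      (X * Y) ⊗ₖ (1 : Matrix (Fin n) (Fin n) ℂ) = (X ⊗ₖ 1) * (Y ⊗ₖ 1) := by
    intro X Y
    rw [← mul_kronecker_mul, Matrix.one_mul]
  have mulR : ∀ X Y : Matrix (Fin n) (Fin n) ℂ,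
      (1 : Matrix (Fin m) (Fin m) ℂ) ⊗ₖ (X * Y) = (1 ⊗ₖ X) * (1 ⊗ₖ Y) := by
    intro X Y
    rw [← mul_kronecker_mul, Matrix.one_mul]
  have split : ∀ (X : Matrix (Fin m) (Fin m) ℂ) (Y : Matrix (Fin n) (Fin n) ℂ),
      X ⊗ₖ Y = (X ⊗ₖ 1) * (1 ⊗ₖ Y) := by
    intro X Y
    rw [← mul_kronecker_mul, Matrix.one_mul, Matrix.mul_one]
  have three : ∀ X : Matrix (Fin m × Fin n) (Fin m × Fin n) ℂ, (3 : ℂ) • X = 3 * X := by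
    intro X
    rw [Algebra.smul_def, map_ofNat]
  have hW : bellOpSqrt2 A₀ A₁ A₂ B₀ B₁ B₂
      = a₀ * (b₀ + b₁ + √2 • b₂) + a₁ * (b₀ + b₁ - √2 • b₂) + √2 • (a₂ * (b₀ - b₁)) := by
    simp only [bellOpSqrt2, ha₀, ha₁, ha₂, hb₀, hb₁, hb₂, smulc, mul_add, mul_sub,
      Matrix.mul_smul, ← mul_kronecker_mul, Matrix.one_mul, Matrix.mul_one, kronecker_add,
      kronecker_smul, subR]
  have hC : CX A₀ A₁ A₂ B₀ B₁ = (64 : ℂ)⁻¹ •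
      ((3 * (a₀ + a₁) - (a₁ * a₀ * a₁ + a₀ * a₁ * a₀)
          - a₂ * (3 * (a₀ + a₁) - (a₁ * a₀ * a₁ + a₀ * a₁ * a₀)) * a₂)
        * (3 * (b₀ + b₁) - (b₁ * b₀ * b₁ + b₀ * b₁ * b₀))) := by
    rw [CX, split]
    simp only [kronecker_add, add_kronecker, kronecker_smul, smul_kronecker, subL, subR, mulL,
      mulR, three, ← ha₀, ← ha₁, ← ha₂, ← hb₀, ← hb₁]
    congr 2
    noncomm_ring
  have hsum := bell_sos_s17 Sa₀ Sa₁ Sa₂ Sb₀ Sb₁ Sb₂ (comm A₀ B₀) (comm A₀ B₁) (comm A₀ B₂)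
    (comm A₁ B₀) (comm A₁ B₁) (comm A₁ B₂) (comm A₂ B₀) (comm A₂ B₁)
  rw [← ha₀, ← ha₁, ← ha₂, ← hb₀, ← hb₁, ← hb₂, ← hW] at hsum
  have herm₁ : (a₀ + a₁ - (b₀ + b₁)).IsHermitian := (Ha₀.add Ha₁).sub (Hb₀.add Hb₁)
  have hsm : ∀ u : Matrix (Fin m × Fin n) (Fin m × Fin n) ℂ, u.IsHermitian →
      (√2 • u).IsHermitian := by
    intro u hu
    rw [Matrix.IsHermitian, conjTranspose_smul, hu.eq, star_trivial]
  have herm₂ : (a₀ - a₁ - √2 • b₂).IsHermitian := (Ha₀.sub Ha₁).sub (hsm _ Hb₂)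
  have herm₃ : (b₀ - b₁ - √2 • a₂).IsHermitian := (Hb₀.sub Hb₁).sub (hsm _ Ha₂)
  have hqsum : q (a₀ + a₁ - (b₀ + b₁)) ^ 2 + q (a₀ - a₁ - √2 • b₂) ^ 2
      + q (b₀ - b₁ - √2 • a₂) ^ 2 ≤ 2 * ε := by
    rw [hq, hq, hq, herm₁.eq, herm₂.eq, herm₃.eq, ← Complex.add_re, ← Complex.add_re,
      ← trace_add, ← trace_add, ← Matrix.add_mul, ← Matrix.add_mul, hsum, Matrix.sub_mul,
      trace_sub, Matrix.smul_mul, Matrix.smul_mul, Matrix.one_mul, trace_smul, trace_smul, hρtr,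
      Complex.sub_re, Complex.smul_re, Complex.smul_re]
    simp only [smul_eq_mul, Complex.one_re]
    linarith
  have core := bell_core q (r := √(2 * ε)) Sa₀ Sa₁ Sa₂ Sb₀ Sb₁ Sb₂
    (comm A₀ B₀) (comm A₀ B₁) (comm A₀ B₂)
    (comm A₁ B₀) (comm A₁ B₁) (comm A₁ B₂) (comm A₂ B₀) (comm A₂ B₁)
    (qiso _ Ha₀ Sa₀) (qiso _ Ha₁ Sa₁) (qiso _ Ha₂ Sa₂)
    (qiso _ Hb₀ Sb₀) (qiso _ Hb₁ Sb₁) (qiso _ Hb₂ Sb₂)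
    (Real.le_sqrt_of_sq_le (by
      linarith [sq_nonneg (q (a₀ - a₁ - √2 • b₂)), sq_nonneg (q (b₀ - b₁ - √2 • a₂))]))
    (Real.le_sqrt_of_sq_le (by
      linarith [sq_nonneg (q (a₀ + a₁ - (b₀ + b₁))), sq_nonneg (q (b₀ - b₁ - √2 • a₂))]))
    (Real.le_sqrt_of_sq_le (by
      linarith [sq_nonneg (q (a₀ - a₁ - √2 • b₂)), sq_nonneg (q (a₀ + a₁ - (b₀ + b₁)))]))
  rw [← ha₀, ← ha₁, ← ha₂, ← hb₀, ← hb₁] at core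
  rw [hC]
  generalize (3 * (a₀ + a₁) - (a₁ * a₀ * a₁ + a₀ * a₁ * a₀)
          - a₂ * (3 * (a₀ + a₁) - (a₁ * a₀ * a₁ + a₀ * a₁ * a₀)) * a₂)
        * (3 * (b₀ + b₁) - (b₁ * b₀ * b₁ + b₀ * b₁ * b₀)) = X at core ⊢
  have hX := (hq1 (X - 64)).trans_eq (by rw [q1, mul_one])
  have h64 : (64 : Matrix (Fin m × Fin n) (Fin m × Fin n) ℂ) = (64 : ℝ) • 1 := by
    rw [Algebra.smul_def, mul_one, map_ofNat]
  have htr : (((X - 64) * ρ).trace).re = ((X * ρ).trace).re - 64 := by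
    rw [Matrix.sub_mul, trace_sub, h64, Matrix.smul_mul, Matrix.one_mul, trace_smul, hρtr,
      Complex.sub_re, Complex.smul_re, Complex.one_re, smul_eq_mul, mul_one]
  have hc : ((((64 : ℂ)⁻¹ • X) * ρ).trace).re = 64⁻¹ * ((X * ρ).trace).re := by
    have : (64 : ℂ)⁻¹ = ((64⁻¹ : ℝ) : ℂ) := by push_cast; rfl
    rw [this, smulc, Matrix.smul_mul, trace_smul, Complex.smul_re, smul_eq_mul]
  rw [htr] at hX
  have hlow := (abs_le.1 (hX.trans core)).1
  have c2 : √2 * √2 = (2 : ℝ) := Real.mul_self_sqrt (by norm_num)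
  have hconst : 64 * (5 + 7 / 2 * √2) * √(2 * ε) = 64 * ((7 + 5 * √2) * √ε) := by
    rw [Real.sqrt_mul (by norm_num)]
    linear_combination 224 * √ε * c2
  rw [hc]
  rw [hconst] at hlow
  linarith

end
end
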